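/- arXiv:1310.7059 — 4 statements merged into one kernel-verified Lean document; each statement's English description precedes it below -/
import Mathlib

section
/- Fix integers n ≥ k ≥ 1 and a partition λ = (λ_1 ≥ λ_2 ≥ ⋯ ≥ λ_k ≥ 0) with λ_1 ≤ n−k. There exists a bijection φ between the set of Condensed Catalan tableaux of shape λ and the set of Catalan paths constrained by λ such that for every tableau T, if the filling of T contains j α's and ℓ β's, then the weight of the path φ(T) equals α^j β^ℓ; in particular φ is weight-preserving once both sides are multiplied by the boundary factor α^k β^{n−k}. -/
open scoped Classical
open Finset

/-- A Condensed Catalan tableau with `k` rows inside a rectangle of width `w`,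
of shape `lam`: cells are `none` (empty), `some true` (an α) or `some false` (a β).
Cells outside the Young diagram of `lam` are empty; every box strictly west of a β in
its row is empty; every box strictly north of an α in its column is empty; and every
box with no α strictly south of it in its column and no β strictly east of it in its
row is nonempty. -/
def IsCCT (k w : ℕ) (lam : Fin k → ℕ) (F : Fin k → Fin w → Option Bool) : Prop :=
  (∀ (i : Fin k) (c : Fin w), lam i ≤ (c : ℕ) → F i c = none) ∧
  (∀ (i : Fin k) (c c' : Fin w), F i c = some false → c' < c → F i c' = none) ∧
  (∀ (i i' : Fin k) (c : Fin w), F i c = some true → i' < i → F i' c = none) ∧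
  (∀ (i : Fin k) (c : Fin w), (c : ℕ) < lam i →
    (∀ i' : Fin k, i < i' → F i' c ≠ some true) →
    (∀ c' : Fin w, c < c' → (c' : ℕ) < lam i → F i c' ≠ some false) →
    F i c ≠ none)

/-- The number of α's in the filling. -/
def aCount (k w : ℕ) (F : Fin k → Fin w → Option Bool) : ℕ :=
  (Finset.univ.filter fun p : Fin k × Fin w => F p.1 p.2 = some true).card

/-- The number of β's in the filling. -/
def bCount (k w : ℕ) (F : Fin k → Fin w → Option Bool) : ℕ :=
  (Finset.univ.filter fun p : Fin k × Fin w => F p.1 p.2 = some false).card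

/-- A Catalan path constrained by `lam`, encoded by the sequence `C` where `C i` is the
number of columns strictly west of the south step of the path in row `i`:
`C` is weakly decreasing and `C i ≤ lam i`. -/
def IsCatalanPath (k : ℕ) (lam : Fin k → ℕ) (C : Fin k → ℕ) : Prop :=
  (∀ i j : Fin k, i ≤ j → C j ≤ C i) ∧ (∀ i, C i ≤ lam i)

/-- The number of west steps of the Catalan path `C` lying strictly above the
southeast border `L` of the Young diagram of `lam` (each such step is weighted α). -/
def pathAlphaCount (k : ℕ) (lam C : Fin k → ℕ) : ℕ :=
  (let lamE : ℕ → ℕ := fun t => if h : t < k then lam ⟨t, h⟩ else 0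
   let CE : ℕ → ℕ := fun t => if h : t < k then C ⟨t, h⟩ else 0
   (lamE 0 - CE 0) + ∑ t ∈ Finset.range k, (min (CE t) (lamE (t + 1)) - CE (t + 1)))

/-- The number of south steps of the Catalan path `C` not on the west boundary of the
rectangle (each such step is weighted β). -/
def pathBetaCount (k : ℕ) (C : Fin k → ℕ) : ℕ :=
  (Finset.univ.filter fun i : Fin k => 0 < C i).card

/-- The weight of the Catalan path `C` in `ℤ[α,β]`, where `α = X 0`, `β = X 1`. -/
noncomputable def pathWeight (k : ℕ) (lam C : Fin k → ℕ) : MvPolynomial (Fin 2) ℤ :=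
  MvPolynomial.X 0 ^ pathAlphaCount k lam C * MvPolynomial.X 1 ^ pathBetaCount k C

/-!
In each column call a row *open* if its box lies in the diagram and no β lies strictly east of it.
The filling of a column is determined by its set of open rows and its number `b` of β's: reading
the open rows from south to north, the first `b` hold β, the next one, if there is one, holds α,
and the others are empty. So, reading the columns from east to west, a tableau amounts to the
numbers `V c` of rows containing a β in column `c` or further east, and these can be any weakly
decreasing numbers bounded by the column lengths of `λ`. Conjugating the partition `V` gives the
Catalan path. A column holds an α exactly when `V c` is less than the length of that column of `λ`.
-/

section Conjugate

variable {ι : Type*} [Fintype ι] {m k w : ℕ} {lam : Fin k → ℕ}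

/-- The conjugate of the partition with parts `f i`, as a sequence indexed from `0`: its `c`-th
part is the number of parts of `f` exceeding `c`. -/
def conjugate (f : ι → ℕ) (c : ℕ) : ℕ := #{i | c < f i}

lemma conjugate_antitone (f : ι → ℕ) : Antitone (conjugate f) := fun _ _ hab =>
  card_le_card (monotone_filter_right _ fun _ _ h => hab.trans_lt h)

lemma conjugate_mono {f g : ι → ℕ} (h : f ≤ g) : conjugate f ≤ conjugate g := fun _ =>
  card_le_card (monotone_filter_right _ fun i _ hi => hi.trans_le (h i))

lemma conjugate_le_card (f : ι → ℕ) (c : ℕ) : conjugate f c ≤ Fintype.card ι :=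
  card_le_univ _

lemma conjugate_lt_conjugate_iff {f g : ι → ℕ} (h : f ≤ g) (c : ℕ) :
    conjugate f c < conjugate g c ↔ ∃ i, f i ≤ c ∧ c < g i := by
  have hsub : ({i | c < f i} : Finset ι) ⊆ ({i | c < g i} : Finset ι) :=
    monotone_filter_right _ fun i _ hi => hi.trans_le (h i)
  constructor
  · intro hlt
    obtain ⟨i, hg, hf⟩ := exists_mem_notMem_of_card_lt_card hlt
    exact ⟨i, by simpa using hf, by simpa using hg⟩
  · rintro ⟨i, hf, hg⟩
    exact card_lt_card ((ssubset_iff_of_subset hsub).2 ⟨i, by simpa using hg, by simpa using hf⟩)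

lemma lt_conjugate_iff {f : Fin m → ℕ} (hf : Antitone f) (i : Fin m) (c : ℕ) :
    (i : ℕ) < conjugate f c ↔ c < f i :=
  Fin.lt_card_filter_univ_iff_apply_of_imp (fun j => c < f j) fun _ _ hji h => h.trans_le (hf hji)

lemma conjugate_conjugate {f : Fin m → ℕ} (hf : Antitone f) (hw : ∀ i, f i ≤ w) (i : Fin m) :
    conjugate (fun c : Fin w => conjugate f c) i = f i :=
  calc conjugate (fun c : Fin w => conjugate f c) i
      = #{c : Fin w | (c : ℕ) < f i} :=
        congrArg card (filter_congr fun c _ => lt_conjugate_iff hf i c)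
    _ = f i := by rw [Fin.card_filter_val_lt, min_eq_right (hw i)]

/-- `V` is a weakly decreasing assignment of numbers to the columns of the diagram of `lam` that
is bounded by the column lengths: the conjugate of a Catalan path constrained by `lam`. -/
def IsColumnProfile (lam : Fin k → ℕ) (V : Fin w → ℕ) : Prop :=
  Antitone V ∧ ∀ c : Fin w, V c ≤ conjugate lam c

lemma IsColumnProfile.isCatalanPath_conjugate (hmono : Antitone lam) (hbd : ∀ i, lam i ≤ w)
    {V : Fin w → ℕ} (hV : IsColumnProfile lam V) :
    IsCatalanPath k lam fun i => conjugate V i := by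
  refine ⟨fun i j hij => conjugate_antitone V hij, fun i => ?_⟩
  calc conjugate V i ≤ conjugate (fun c : Fin w => conjugate lam c) i := conjugate_mono hV.2 i
    _ = lam i := conjugate_conjugate hmono hbd i

lemma IsCatalanPath.isColumnProfile_conjugate {C : Fin k → ℕ} (hC : IsCatalanPath k lam C) :
    IsColumnProfile lam fun c : Fin w => conjugate C c :=
  ⟨fun _ _ hcd => conjugate_antitone C hcd, fun c => conjugate_mono hC.2 c⟩

protected lemma IsColumnProfile.conjugate_conjugate {V : Fin w → ℕ} (hV : IsColumnProfile lam V)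
    (c : Fin w) : conjugate (fun i : Fin k => conjugate V i) c = V c :=
  conjugate_conjugate hV.1
    (fun d => (hV.2 d).trans <| by simpa using conjugate_le_card lam d) c

/-- Conjugation of partitions, as a bijection between column profiles and Catalan paths. -/
def profileEquivPath (hmono : Antitone lam) (hbd : ∀ i, lam i ≤ w) :
    {V : Fin w → ℕ // IsColumnProfile lam V} ≃ {C : Fin k → ℕ // IsCatalanPath k lam C} where
  toFun V := ⟨fun i => conjugate V.1 i, V.2.isCatalanPath_conjugate hmono hbd⟩
  invFun C := ⟨fun c => conjugate C.1 c, C.2.isColumnProfile_conjugate⟩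
  left_inv V := Subtype.ext <| funext V.2.conjugate_conjugate
  right_inv C := Subtype.ext <| funext <|
    conjugate_conjugate C.2.1 fun i => (C.2.2 i).trans (hbd i)

end Conjugate

section PathAlphaCount

variable {k w : ℕ} {lam : Fin k → ℕ}

lemma card_biUnion_Ico_of_antitone {a l : ℕ → ℕ} (ha : Antitone a) (hl : Antitone l) (m : ℕ) :
    #((range (m + 1)).biUnion fun i => Ico (a i) (l i)) =
      (l 0 - a 0) + ∑ t ∈ range m, (min (a t) (l (t + 1)) - a (t + 1)) := by
  induction m with
  | zero => simp
  | succ m ih =>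
    have hstep : ((range (m + 2)).biUnion fun i => Ico (a i) (l i)) =
        ((range (m + 1)).biUnion fun i => Ico (a i) (l i)) ∪
          Ico (a (m + 1)) (min (a m) (l (m + 1))) := by
      ext c
      simp only [mem_biUnion, mem_union, mem_range, mem_Ico]
      have := hl (Nat.le_add_right m 1)
      constructor
      · rintro ⟨i, hi, hac, hcl⟩
        rcases (Nat.lt_succ_iff.1 hi).lt_or_eq with him | rfl
        · exact .inl ⟨i, him, hac, hcl⟩
        · by_cases hc : a m ≤ c
          · exact .inl ⟨m, by omega, hc, by omega⟩
          · exact .inr ⟨hac, by omega⟩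
      · rintro (⟨i, hi, h⟩ | ⟨hac, hcl⟩)
        · exact ⟨i, by omega, h⟩
        · exact ⟨m + 1, by omega, hac, by omega⟩
    have hdisj : Disjoint ((range (m + 1)).biUnion fun i => Ico (a i) (l i))
        (Ico (a (m + 1)) (min (a m) (l (m + 1)))) := by
      refine disjoint_left.2 fun c hc hc' => ?_
      simp only [mem_biUnion, mem_range, mem_Ico] at hc hc'
      obtain ⟨i, hi, hac, -⟩ := hc
      have := ha (Nat.lt_succ_iff.1 hi)
      omega
    rw [hstep, card_union_of_disjoint hdisj, ih, Nat.card_Ico, sum_range_succ, add_assoc]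

/-- The extension of a finite sequence by zeros, as in the definition of `pathAlphaCount`. -/
def zeroExtend (f : Fin k → ℕ) (t : ℕ) : ℕ := if h : t < k then f ⟨t, h⟩ else 0

lemma zeroExtend_val (f : Fin k → ℕ) (i : Fin k) : zeroExtend f i = f i := dif_pos i.2

lemma zeroExtend_of_le (f : Fin k → ℕ) {t : ℕ} (ht : k ≤ t) : zeroExtend f t = 0 :=
  dif_neg ht.not_gt

lemma zeroExtend_antitone {f : Fin k → ℕ} (hf : Antitone f) : Antitone (zeroExtend f) := by
  intro s t hst
  rcases lt_or_ge t k with ht | ht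
  · simpa only [zeroExtend, ht, hst.trans_lt ht, dif_pos] using hf hst
  · simp [zeroExtend_of_le f ht]

lemma IsCatalanPath.pathAlphaCount_eq (hmono : Antitone lam) (hbd : ∀ i, lam i ≤ w)
    {C : Fin k → ℕ} (hC : IsCatalanPath k lam C) :
    pathAlphaCount k lam C = #{c : Fin w | conjugate C c < conjugate lam c} := by
  have hcount : pathAlphaCount k lam C =
      #((range (k + 1)).biUnion fun t => Ico (zeroExtend C t) (zeroExtend lam t)) :=
    (card_biUnion_Ico_of_antitone (zeroExtend_antitone hC.1) (zeroExtend_antitone hmono) k).symm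
  rw [hcount, ← card_map Fin.valEmbedding]
  congr 1
  ext c
  simp only [mem_biUnion, mem_range, mem_Ico, mem_map, mem_filter, mem_univ, true_and,
    Fin.valEmbedding_apply, conjugate_lt_conjugate_iff hC.2]
  constructor
  · rintro ⟨t, -, hCt, hlt⟩
    rcases lt_or_ge t k with ht | ht
    · lift t to Fin k using ht
      rw [zeroExtend_val] at hCt hlt
      exact ⟨⟨c, hlt.trans_le (hbd t)⟩, ⟨t, hCt, hlt⟩, rfl⟩
    · simp [zeroExtend_of_le lam ht] at hlt
  · rintro ⟨c, ⟨i, hCi, hlt⟩, rfl⟩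
    exact ⟨i, by omega, by rwa [zeroExtend_val], by rwa [zeroExtend_val]⟩

end PathAlphaCount

section Column

variable {κ : Type*} [LinearOrder κ]

/-- The position of `i` in `O`, counted from `0` starting at the largest element (the southernmost
row). -/
def rankFromBelow (O : Finset κ) (i : κ) : ℕ := #{j ∈ O | i < j}

lemma rankFromBelow_strictAntiOn (O : Finset κ) : StrictAntiOn (rankFromBelow O) O := by
  intro i _ j hj hij
  refine card_lt_card ((ssubset_iff_of_subset ?_).2 ⟨j, ?_, ?_⟩)
  · exact monotone_filter_right _ fun _ _ h => hij.trans h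
  · simpa using ⟨hj, hij⟩
  · simp

lemma rankFromBelow_lt_card {O : Finset κ} {i : κ} (hi : i ∈ O) : rankFromBelow O i < #O :=
  card_lt_card (filter_ssubset.2 ⟨i, hi, lt_irrefl i⟩)

lemma exists_rankFromBelow_eq {O : Finset κ} {r : ℕ} (hr : r < #O) :
    ∃ i ∈ O, rankFromBelow O i = r := by
  have hsurj : Set.SurjOn (rankFromBelow O) O (range #O) :=
    surjOn_of_injOn_of_card_le _ (fun i hi => by simpa using rankFromBelow_lt_card hi)
      (rankFromBelow_strictAntiOn O).injOn (by simp)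
  simpa using hsurj (by simpa using hr : r ∈ (range #O : Set ℕ))

lemma card_filter_rankFromBelow_lt {O : Finset κ} {b : ℕ} (hb : b ≤ #O) :
    #{i ∈ O | rankFromBelow O i < b} = b := by
  suffices h : {i ∈ O | rankFromBelow O i < b}.image (rankFromBelow O) = range b by
    rw [← card_image_of_injOn (f := rankFromBelow O), h, card_range]
    exact (rankFromBelow_strictAntiOn O).injOn.mono (coe_subset.2 (filter_subset _ _))
  ext r
  simp only [mem_image, mem_filter, mem_range]
  constructor
  · rintro ⟨i, ⟨_, hi⟩, rfl⟩
    exact hi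
  · intro hr
    obtain ⟨i, hi, rfl⟩ := exists_rankFromBelow_eq (hr.trans_le hb)
    exact ⟨i, ⟨hi, hr⟩, rfl⟩

/-- The filling of a column with set `O` of open rows that has a β in the `b` southernmost rows of
`O` and an α in the next row of `O`, if there is one. -/
def fillColumn (O : Finset κ) (b : ℕ) (i : κ) : Option Bool :=
  if i ∈ O then
    if rankFromBelow O i < b then some false
    else if rankFromBelow O i = b then some true else none
  else none

lemma fillColumn_eq_beta_iff {O : Finset κ} {b : ℕ} {i : κ} :
    fillColumn O b i = some false ↔ i ∈ O ∧ rankFromBelow O i < b := by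
  grind [fillColumn]

lemma fillColumn_eq_alpha_iff {O : Finset κ} {b : ℕ} {i : κ} :
    fillColumn O b i = some true ↔ i ∈ O ∧ rankFromBelow O i = b := by
  grind [fillColumn]

lemma fillColumn_eq_none_iff {O : Finset κ} {b : ℕ} {i : κ} :
    fillColumn O b i = none ↔ (i ∈ O → b < rankFromBelow O i) := by
  grind [fillColumn]

lemma exists_fillColumn_eq_alpha_iff {O : Finset κ} {b : ℕ} :
    (∃ i, fillColumn O b i = some true) ↔ b < #O := by
  simp only [fillColumn_eq_alpha_iff]
  constructor
  · rintro ⟨i, hi, rfl⟩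
    exact rankFromBelow_lt_card hi
  · exact exists_rankFromBelow_eq

lemma card_filter_fillColumn_eq_beta [Fintype κ] {O : Finset κ} {b : ℕ} (hb : b ≤ #O) :
    #{i | fillColumn O b i = some false} = b := by
  refine (congrArg card (Finset.ext fun i => ?_)).trans (card_filter_rankFromBelow_lt hb)
  simp only [mem_filter, mem_univ, true_and, fillColumn_eq_beta_iff]

/-- The conditions that the definition of a Condensed Catalan tableau imposes on the filling `f`
of a single column whose set of open rows is `O`. -/
structure IsCondensedColumn (O : Finset κ) (f : κ → Option Bool) : Prop where
  eq_none_of_notMem : ∀ i ∉ O, f i = none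
  eq_none_of_lt_alpha : ∀ i i', f i = some true → i' < i → f i' = none
  exists_alpha_of_eq_none : ∀ i ∈ O, f i = none → ∃ i', i < i' ∧ f i' = some true

lemma isCondensedColumn_fillColumn (O : Finset κ) (b : ℕ) :
    IsCondensedColumn O (fillColumn O b) where
  eq_none_of_notMem i hi := by simp [fillColumn, hi]
  eq_none_of_lt_alpha i i' hi hlt := by
    obtain ⟨hiO, rfl⟩ := fillColumn_eq_alpha_iff.1 hi
    exact fillColumn_eq_none_iff.2 fun hi'O => rankFromBelow_strictAntiOn O hi'O hiO hlt
  exists_alpha_of_eq_none i hi hnone := by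
    have hb : b < rankFromBelow O i := fillColumn_eq_none_iff.1 hnone hi
    obtain ⟨i', hi'O, rfl⟩ := exists_rankFromBelow_eq (hb.trans (rankFromBelow_lt_card hi))
    exact ⟨i', (rankFromBelow_strictAntiOn O).lt_iff_gt hi'O hi |>.1 hb,
      fillColumn_eq_alpha_iff.2 ⟨hi'O, rfl⟩⟩

namespace IsCondensedColumn

variable {O : Finset κ} {f : κ → Option Bool}

lemma mem_of_ne_none (hf : IsCondensedColumn O f) {i : κ} (hi : f i ≠ none) : i ∈ O :=
  not_imp_comm.1 (hf.eq_none_of_notMem i) hi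

lemma eq_beta_of_lt (hf : IsCondensedColumn O f) {i j : κ} (hi : f i ≠ none) (hij : i < j)
    (hj : j ∈ O) : f j = some false := by
  rcases hfj : f j with _ | _ | _
  · obtain ⟨i', hji', hi'⟩ := hf.exists_alpha_of_eq_none j hj hfj
    exact absurd (hf.eq_none_of_lt_alpha i' i hi' (hij.trans hji')) hi
  · rfl
  · exact absurd (hf.eq_none_of_lt_alpha j i hfj hij) hi

variable [Fintype κ]

lemma rankFromBelow_lt_of_eq_beta (hf : IsCondensedColumn O f) {i : κ} (hi : f i = some false) :
    rankFromBelow O i < #{j | f j = some false} := by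
  refine card_lt_card ((ssubset_iff_of_subset fun j hj => ?_).2 ⟨i, by simpa using hi, by simp⟩)
  obtain ⟨hjO, hij⟩ := mem_filter.1 hj
  simpa using hf.eq_beta_of_lt (by simp [hi]) hij hjO

lemma rankFromBelow_eq_of_eq_alpha (hf : IsCondensedColumn O f) {i : κ} (hi : f i = some true) :
    rankFromBelow O i = #{j | f j = some false} := by
  refine congrArg card (Finset.ext fun j => ?_)
  simp only [mem_filter, mem_univ, true_and]
  constructor
  · rintro ⟨hjO, hij⟩
    exact hf.eq_beta_of_lt (by simp [hi]) hij hjO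
  · intro hj
    refine ⟨hf.mem_of_ne_none (by simp [hj]), ?_⟩
    by_contra! hji
    rcases hji.lt_or_eq with hlt | rfl
    · simp [hf.eq_none_of_lt_alpha i j hi hlt] at hj
    · simp [hi] at hj

lemma eq_fillColumn (hf : IsCondensedColumn O f) : f = fillColumn O #{i | f i = some false} := by
  funext i
  rcases hfi : f i with _ | _ | _
  · refine (fillColumn_eq_none_iff.2 fun hiO => ?_).symm
    obtain ⟨i', hlt, hi'⟩ := hf.exists_alpha_of_eq_none i hiO hfi
    rw [← hf.rankFromBelow_eq_of_eq_alpha hi']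
    exact rankFromBelow_strictAntiOn O hiO (hf.mem_of_ne_none (by simp [hi'])) hlt
  · exact (fillColumn_eq_beta_iff.2
      ⟨hf.mem_of_ne_none (by simp [hfi]), hf.rankFromBelow_lt_of_eq_beta hfi⟩).symm
  · exact (fillColumn_eq_alpha_iff.2
      ⟨hf.mem_of_ne_none (by simp [hfi]), hf.rankFromBelow_eq_of_eq_alpha hfi⟩).symm

end IsCondensedColumn

end Column

section Tableau

variable {k w : ℕ} {lam : Fin k → ℕ} {F G : Fin k → Fin w → Option Bool}

/-- The rows of `F` that contain a β in column `c` or further east. The column index is a natural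
number so that `c + 1` makes sense for the easternmost column. -/
def betaRows (F : Fin k → Fin w → Option Bool) (c : ℕ) : Finset (Fin k) :=
  {i | ∃ d : Fin w, c ≤ d ∧ F i d = some false}

/-- The rows whose box in column `c` lies in the diagram of `lam` and has no β strictly east of
it. -/
def openRows (lam : Fin k → ℕ) (F : Fin k → Fin w → Option Bool) (c : ℕ) : Finset (Fin k) :=
  ({i | c < lam i} : Finset (Fin k)) \ betaRows F (c + 1)

lemma mem_betaRows {c : ℕ} {i : Fin k} :
    i ∈ betaRows F c ↔ ∃ d : Fin w, c ≤ d ∧ F i d = some false := by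
  simp [betaRows]

lemma mem_openRows {c : ℕ} {i : Fin k} :
    i ∈ openRows lam F c ↔ c < lam i ∧ ∀ d : Fin w, c < d → F i d ≠ some false := by
  simp [openRows, mem_betaRows]

lemma betaRows_antitone (F : Fin k → Fin w → Option Bool) : Antitone (betaRows F) :=
  fun _ _ hcd => monotone_filter_right _ fun _ _ ⟨d, hd, hβ⟩ => ⟨d, hcd.trans hd, hβ⟩

lemma betaRows_eq_empty {c : ℕ} (hc : w ≤ c) : betaRows F c = ∅ := by
  simp only [betaRows, filter_eq_empty_iff]
  rintro i - ⟨d, hd, -⟩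
  omega

lemma betaRows_congr {c : ℕ} (h : ∀ i (d : Fin w), c ≤ d → F i d = G i d) :
    betaRows F c = betaRows G c :=
  filter_congr fun i _ => exists_congr fun d => and_congr_right fun hd => by rw [h i d hd]

lemma betaRows_eq_union (F : Fin k → Fin w → Option Bool) (c : Fin w) :
    betaRows F c = ({i | F i c = some false} : Finset (Fin k)) ∪ betaRows F (c + 1) := by
  ext i
  simp only [mem_union, mem_filter, mem_univ, true_and, mem_betaRows, Nat.succ_le_iff]
  constructor
  · rintro ⟨d, hcd, hd⟩
    rcases hcd.eq_or_lt with h | h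
    · exact .inl (Fin.ext h ▸ hd)
    · exact .inr ⟨d, h, hd⟩
  · rintro (hc | ⟨d, hcd, hd⟩)
    · exact ⟨c, le_rfl, hc⟩
    · exact ⟨d, hcd.le, hd⟩

lemma isCCT_iff_forall_isCondensedColumn :
    IsCCT k w lam F ↔ ∀ c : Fin w, IsCondensedColumn (openRows lam F c) fun i => F i c := by
  constructor
  · rintro ⟨hout, hβ, hα, hne⟩ c
    refine ⟨fun i hi => ?_, fun i i' => hα i i' c, fun i hi hnone => ?_⟩
    · by_cases hlam : (c : ℕ) < lam i
      · simp only [mem_openRows, hlam, true_and, not_forall, not_not] at hi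
        obtain ⟨d, hcd, hd⟩ := hi
        exact hβ i d c hd hcd
      · exact hout i c (not_lt.1 hlam)
    · obtain ⟨hlam, hopen⟩ := mem_openRows.1 hi
      by_contra! hno
      exact hne i c hlam hno (fun d hcd _ => hopen d hcd) hnone
  · intro h
    have hout (i : Fin k) (c : Fin w) (hc : lam i ≤ c) : F i c = none :=
      (h c).eq_none_of_notMem i fun hi => (mem_openRows.1 hi).1.not_ge hc
    refine ⟨hout, fun i c d hc hdc => ?_, fun i i' c => (h c).eq_none_of_lt_alpha i i',
      fun i c hlam hα hβ hnone => ?_⟩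
    · exact (h d).eq_none_of_notMem i fun hi => (mem_openRows.1 hi).2 c hdc hc
    · have hopen : i ∈ openRows lam F c := mem_openRows.2 ⟨hlam, fun d hcd hd =>
        hβ d hcd (not_le.1 fun hle => by simp [hout i d hle] at hd) hd⟩
      obtain ⟨i', hlt, hi'⟩ := (h c).exists_alpha_of_eq_none i hopen hnone
      exact hα i' hlt hi'

namespace IsCCT

lemma isCondensedColumn (hF : IsCCT k w lam F) (c : Fin w) :
    IsCondensedColumn (openRows lam F c) fun i => F i c :=
  isCCT_iff_forall_isCondensedColumn.1 hF c

lemma mem_openRows_of_ne_none (hF : IsCCT k w lam F) {i : Fin k} {c : Fin w} (h : F i c ≠ none) :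
    i ∈ openRows lam F c :=
  (hF.isCondensedColumn c).mem_of_ne_none h

lemma betaRows_subset (hF : IsCCT k w lam F) (c : ℕ) :
    betaRows F c ⊆ ({i | c < lam i} : Finset (Fin k)) := by
  intro i hi
  obtain ⟨d, hcd, hd⟩ := mem_betaRows.1 hi
  have hlam : (d : ℕ) < lam i := (mem_openRows.1 (hF.mem_openRows_of_ne_none (by simp [hd]))).1
  simpa using hcd.trans_lt hlam

lemma card_betaRows (hF : IsCCT k w lam F) (c : Fin w) :
    #(betaRows F c) = #{i | F i c = some false} + #(betaRows F (c + 1)) := by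
  rw [betaRows_eq_union, card_union_of_disjoint]
  refine disjoint_left.2 fun i hi => ?_
  exact (mem_sdiff.1 (hF.mem_openRows_of_ne_none (by simp [(mem_filter.1 hi).2]))).2

lemma card_openRows_add (hF : IsCCT k w lam F) (c : ℕ) :
    #(openRows lam F c) + #(betaRows F (c + 1)) = conjugate lam c :=
  card_sdiff_add_card_eq_card <| (betaRows_antitone F c.le_succ).trans (hF.betaRows_subset c)

lemma isColumnProfile (hF : IsCCT k w lam F) :
    IsColumnProfile lam fun c : Fin w => #(betaRows F c) :=
  ⟨fun _ _ hcd => card_le_card (betaRows_antitone F hcd),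
    fun c => card_le_card (hF.betaRows_subset c)⟩

end IsCCT

/-- Each column of `F` is filled from its open rows with just as many β's as needed for the number
of rows with a β in column `c` or further east to become `V c`. This determines `F` recursively,
from east to west. -/
def FollowsProfile (lam : Fin k → ℕ) (V : Fin w → ℕ) (F : Fin k → Fin w → Option Bool) : Prop :=
  ∀ c : Fin w, (fun i => F i c) = fillColumn (openRows lam F c) (V c - #(betaRows F (c + 1)))

lemma IsCCT.followsProfile (hF : IsCCT k w lam F) :
    FollowsProfile lam (fun c : Fin w => #(betaRows F c)) F := by
  intro c
  dsimp only
  rw [hF.card_betaRows c, Nat.add_sub_cancel_right]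
  exact (hF.isCondensedColumn c).eq_fillColumn

namespace FollowsProfile

variable {V : Fin w → ℕ}

protected lemma unique (hF : FollowsProfile lam V F) (hG : FollowsProfile lam V G) : F = G := by
  have hcol (c : Fin w) : (fun i => F i c) = fun i => G i c := by
    induction c using WellFoundedGT.induction with
    | ind c ih =>
      have hβ : betaRows F (c + 1) = betaRows G (c + 1) :=
        betaRows_congr fun i d hcd => congrFun (ih d hcd) i
      rw [hF c, hG c, openRows, openRows, hβ]
  exact funext fun i => funext fun c => congrFun (hcol c) i

lemma isCCT (hF : FollowsProfile lam V F) : IsCCT k w lam F :=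
  isCCT_iff_forall_isCondensedColumn.2 fun c => hF c ▸ isCondensedColumn_fillColumn _ _

lemma card_betaRows (hF : FollowsProfile lam V F) (hV : IsColumnProfile lam V) (c : Fin w) :
    #(betaRows F c) = V c := by
  induction c using WellFoundedGT.induction with
  | ind c ih =>
    have hle : #(betaRows F (c + 1)) ≤ V c := by
      by_cases hc : (c : ℕ) + 1 < w
      · have hlt : c < ⟨c + 1, hc⟩ := Nat.lt_succ_self c
        exact (ih ⟨c + 1, hc⟩ hlt).trans_le (hV.1 hlt.le)
      · simp [betaRows_eq_empty (not_lt.1 hc)]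
    have hopen : V c - #(betaRows F (c + 1)) ≤ #(openRows lam F c) := by
      have := hF.isCCT.card_openRows_add c
      have := hV.2 c
      omega
    have hβ : #{i | F i c = some false} = V c - #(betaRows F (c + 1)) := by
      simpa only [← hF c] using card_filter_fillColumn_eq_beta hopen
    rw [hF.isCCT.card_betaRows c, hβ, Nat.sub_add_cancel hle]

end FollowsProfile

/-- Column `c` of the filling with column profile `V`, computed from the columns east of it. -/
noncomputable def profileColumn (lam : Fin k → ℕ) (V : Fin w → ℕ) (c : Fin w) :
    Fin k → Option Bool :=
  let F : Fin k → Fin w → Option Bool :=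
    fun i d => if _h : c < d then profileColumn lam V d i else none
  fillColumn (openRows lam F c) (V c - #(betaRows F (c + 1)))
termination_by w - (c : ℕ)

lemma followsProfile_profileColumn (lam : Fin k → ℕ) (V : Fin w → ℕ) :
    FollowsProfile lam V fun i c => profileColumn lam V c i := by
  intro c
  have hβ : betaRows (fun i d => if _h : c < d then profileColumn lam V d i else none) (c + 1) =
      betaRows (fun i d => profileColumn lam V d i) (c + 1) :=
    betaRows_congr fun i d hcd => dif_pos hcd
  change profileColumn lam V c = _
  rw [profileColumn, openRows, openRows, hβ]

/-- The bijection sending a tableau to the numbers of its rows with a β in column `c` or further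
east. -/
noncomputable def tableauEquivProfile (k w : ℕ) (lam : Fin k → ℕ) :
    {F : Fin k → Fin w → Option Bool // IsCCT k w lam F} ≃
      {V : Fin w → ℕ // IsColumnProfile lam V} where
  toFun F := ⟨fun c => #(betaRows F.1 c), F.2.isColumnProfile⟩
  invFun V := ⟨fun i c => profileColumn lam V.1 c i,
    (followsProfile_profileColumn lam V.1).isCCT⟩
  left_inv F := Subtype.ext <| (followsProfile_profileColumn lam _).unique F.2.followsProfile
  right_inv V := Subtype.ext <| funext <|
    (followsProfile_profileColumn lam V.1).card_betaRows V.2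

end Tableau

section Weight

variable {k w : ℕ} {lam : Fin k → ℕ} {F : Fin k → Fin w → Option Bool}

lemma IsCCT.bCount_eq (hF : IsCCT k w lam F) : bCount k w F = #(betaRows F 0) := by
  refine card_nbij Prod.fst ?_ ?_ ?_
  · rintro ⟨i, c⟩ hic
    exact mem_betaRows.2 ⟨c, Nat.zero_le _, (mem_filter.1 hic).2⟩
  · have hwest := hF.2.1
    rintro ⟨i, c⟩ hc ⟨_, d⟩ hd rfl
    simp only [coe_filter, mem_univ, true_and, Set.mem_ofPred_eq] at hc hd
    rcases lt_trichotomy c d with hlt | rfl | hlt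
    · simp [hwest i d c hd hlt] at hc
    · rfl
    · simp [hwest i c d hc hlt] at hd
  · intro i hi
    obtain ⟨c, -, hc⟩ := mem_betaRows.1 (mem_coe.1 hi)
    exact ⟨(i, c), by simpa using hc, rfl⟩

lemma IsCCT.exists_eq_alpha_iff (hF : IsCCT k w lam F) (c : Fin w) :
    (∃ i, F i c = some true) ↔ #(betaRows F c) < conjugate lam c := by
  have hcol := (hF.isCondensedColumn c).eq_fillColumn
  have hα : (∃ i, F i c = some true) ↔ #{i | F i c = some false} < #(openRows lam F c) := by
    rw [← exists_fillColumn_eq_alpha_iff, ← hcol]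
  rw [hα, hF.card_betaRows c, ← hF.card_openRows_add c]
  exact (Nat.add_lt_add_iff_right).symm

lemma IsCCT.aCount_eq (hF : IsCCT k w lam F) :
    aCount k w F = #{c : Fin w | #(betaRows F c) < conjugate lam c} := by
  simp only [← hF.exists_eq_alpha_iff]
  refine card_nbij Prod.snd ?_ ?_ ?_
  · rintro ⟨i, c⟩ hic
    exact mem_filter.2 ⟨mem_univ c, i, (mem_filter.1 hic).2⟩
  · rintro ⟨i, c⟩ hi ⟨j, _⟩ hj rfl
    simp only [coe_filter, mem_univ, true_and, Set.mem_ofPred_eq] at hi hj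
    have hnorth := (hF.isCondensedColumn c).eq_none_of_lt_alpha
    rcases lt_trichotomy i j with hlt | rfl | hlt
    · simp [hnorth j i hj hlt] at hi
    · rfl
    · simp [hnorth i j hi hlt] at hj
  · intro c hc
    obtain ⟨i, hi⟩ := (mem_filter.1 (mem_coe.1 hc)).2
    exact ⟨(i, c), by simpa using hi, rfl⟩

/-- The bijection between Condensed Catalan tableaux and Catalan paths: the path is the conjugate
of the column profile of the tableau. -/
noncomputable def tableauEquivPath (hmono : Antitone lam) (hbd : ∀ i, lam i ≤ w) :
    {F : Fin k → Fin w → Option Bool // IsCCT k w lam F} ≃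
      {C : Fin k → ℕ // IsCatalanPath k lam C} :=
  (tableauEquivProfile k w lam).trans (profileEquivPath hmono hbd)

lemma conjugate_tableauEquivPath (hmono : Antitone lam) (hbd : ∀ i, lam i ≤ w)
    (T : {F : Fin k → Fin w → Option Bool // IsCCT k w lam F}) (c : Fin w) :
    conjugate (tableauEquivPath hmono hbd T).1 c = #(betaRows T.1 c) :=
  T.2.isColumnProfile.conjugate_conjugate c

lemma pathAlphaCount_tableauEquivPath (hmono : Antitone lam) (hbd : ∀ i, lam i ≤ w)
    (T : {F : Fin k → Fin w → Option Bool // IsCCT k w lam F}) :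
    pathAlphaCount k lam (tableauEquivPath hmono hbd T).1 = aCount k w T.1 := by
  rw [(tableauEquivPath hmono hbd T).2.pathAlphaCount_eq hmono hbd, T.2.aCount_eq]
  simp only [conjugate_tableauEquivPath]

lemma pathBetaCount_tableauEquivPath (hmono : Antitone lam) (hbd : ∀ i, lam i ≤ w)
    (T : {F : Fin k → Fin w → Option Bool // IsCCT k w lam F}) :
    pathBetaCount k (tableauEquivPath hmono hbd T).1 = bCount k w T.1 := by
  rw [T.2.bCount_eq]
  rcases w.eq_zero_or_pos with rfl | hw
  · have hC (i : Fin k) : (tableauEquivPath hmono hbd T).1 i = 0 :=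
      Nat.le_zero.1 (((tableauEquivPath hmono hbd T).2.2 i).trans (hbd i))
    simp [pathBetaCount, hC, betaRows_eq_empty]
  · exact conjugate_tableauEquivPath hmono hbd T ⟨0, hw⟩

end Weight

/-- There is a bijection `φ` between Condensed Catalan tableaux of shape `lam`
(of size `(k,n)`) and Catalan paths constrained by `lam`, such that for every
tableau `T` with `j` α's and `ℓ` β's in its filling, the weight of the path `φ T`
is `α^j β^ℓ`; in particular, multiplying both sides by the boundary factor
`α^k β^(n-k)`, the bijection is weight-preserving. -/
theorem stmt0 (n k : ℕ) (hk : 1 ≤ k) (hkn : k ≤ n) (lam : Fin k → ℕ)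
    (hmono : ∀ i j : Fin k, i ≤ j → lam j ≤ lam i) (hbd : ∀ i, lam i ≤ n - k) :
    ∃ φ : {F : Fin k → Fin (n - k) → Option Bool // IsCCT k (n - k) lam F} ≃
          {C : Fin k → ℕ // IsCatalanPath k lam C},
      ∀ T, pathWeight k lam (φ T).1
              = MvPolynomial.X 0 ^ aCount k (n - k) T.1 * MvPolynomial.X 1 ^ bCount k (n - k) T.1
        ∧ (MvPolynomial.X 0 : MvPolynomial (Fin 2) ℤ) ^ k * MvPolynomial.X 1 ^ (n - k) *
              pathWeight k lam (φ T).1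
            = MvPolynomial.X 0 ^ (k + aCount k (n - k) T.1) *
                MvPolynomial.X 1 ^ ((n - k) + bCount k (n - k) T.1) := by
  have hanti : Antitone lam := fun i j => hmono i j
  have weight (T) : pathWeight k lam (tableauEquivPath hanti hbd T).1 =
      MvPolynomial.X 0 ^ aCount k (n - k) T.1 * MvPolynomial.X 1 ^ bCount k (n - k) T.1 := by
    rw [pathWeight, pathAlphaCount_tableauEquivPath, pathBetaCount_tableauEquivPath]
  refine ⟨tableauEquivPath hanti hbd, fun T => ⟨weight T, ?_⟩⟩
  rw [weight T]
  ring
end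

section
/- (Narayana) Let k ≥ 1 and let λ_1 ≥ λ_2 ≥ ⋯ ≥ λ_k ≥ 0 be integers. The number of integer sequences (C_1, …, C_k) satisfying C_1 ≥ C_2 ≥ ⋯ ≥ C_k ≥ 0 and C_i ≤ λ_i for all i (equivalently, the number of south/west lattice paths from the northeast to the southwest corner of the bounding rectangle that stay weakly northwest of the southeast border of the Young diagram of λ) equals the determinant of the k × k integer matrix A_λ with entries (A_λ)_{ij} = binom(λ_j + 1, j − i + 1) for 1 ≤ i, j ≤ k, where binom(a,b) = 0 whenever b < 0 or b > a. -/
open scoped Classical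
open Finset

/-- The binomial coefficient `binom a b` for integer arguments, with the convention
that it vanishes whenever `b < 0` or `b > a`. -/
def icho (a b : ℤ) : ℤ := if 0 ≤ b ∧ b ≤ a then ((a.toNat).choose b.toNat : ℤ) else 0

/-
Let `F k m` count the paths in the first `k` rows all of whose entries are at least `m`. Splitting
off the paths with last entry `m` gives `F (k + 1) m = F k m + F (k + 1) (m + 1)` for `m ≤ L k`, so
`H k m = (-1) ^ k * F k m` satisfies `Δ (H (k + 1)) = H k` on `[0, L k]`. Since `L` is antitone the
differences can be iterated, and Newton's formula at `L k + 1`, where `H (k + 1)` vanishes, reads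
`∑ i, binom (L k + 1) (k + 1 - i) * H i 0 = 0`. This says that the row vector `H · 0` is orthogonal
to every column of the infinite Hessenberg matrix with entries `binom (L j + 1) (j - i + 1)`, and
Cramer's rule then identifies `H n 0` with `(-1) ^ n` times the determinant of its leading `n × n`
block.
-/

open Matrix
open scoped fwdDiff

section NewtonFormula

variable {G : Type*} [AddCommGroup G]

theorem fwdDiff_iter_eq_of_fwdDiff_eq {n : ℕ} {g : ℕ → ℕ → G}
    (hg : ∀ r x, x + r < n → Δ_[1] (g r) x = g (r + 1) x) (r x : ℕ) (hx : x + r ≤ n) :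
    (fwdDiff 1)^[r] (g 0) x = g r x := by
  induction r generalizing x with
  | zero => rfl
  | succ r ih =>
    rw [Function.iterate_succ_apply', fwdDiff, ih (x + 1) (by omega), ih x (by omega)]
    exact hg r x (by omega)

theorem eq_sum_range_choose_smul_of_fwdDiff_eq {n : ℕ} {g : ℕ → ℕ → G}
    (hg : ∀ r x, x + r < n → Δ_[1] (g r) x = g (r + 1) x) {K : ℕ} (hK : ∀ r, K ≤ r → g r 0 = 0) :
    g 0 n = ∑ r ∈ range K, n.choose r • g r 0 := by
  have newton := shift_eq_sum_fwdDiff_iter 1 (g 0) n 0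
  rw [zero_add, smul_eq_mul, mul_one] at newton
  have hiter : ∀ r ∈ range (n + 1), (fwdDiff 1)^[r] (g 0) 0 = g r 0 := fun r hr =>
    fwdDiff_iter_eq_of_fwdDiff_eq hg r 0 (by simpa [Nat.lt_succ_iff] using hr)
  rw [newton]
  refine sum_congr_of_eq_on_inter (fun r hrn hrK => ?_) (fun r _ hrn => ?_) (fun r hrn _ => ?_)
  · rw [hiter r hrn, hK r (by simpa using hrK), smul_zero]
  · rw [Nat.choose_eq_zero_of_lt (by simpa using hrn), zero_smul]
  · rw [hiter r hrn]

theorem eq_sum_choose_smul_of_fwdDiff_eq_of_antitone {L : ℕ → ℕ} (hL : Antitone L)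
    {H : ℕ → ℕ → G} (hH₀ : ∀ x, Δ_[1] (H 0) x = 0)
    (hH : ∀ k x, x ≤ L k → Δ_[1] (H (k + 1)) x = H k x) (k : ℕ) :
    H (k + 1) (L k + 1) = ∑ i ∈ range (k + 2), (L k + 1).choose (k + 1 - i) • H i 0 := by
  -- The convention `H (-1) = H (-2) = ⋯ = 0` keeps the difference rule valid past `H 0`.
  let g : ℕ → ℕ → G := fun r => if r ≤ k + 1 then H (k + 1 - r) else 0
  have hg_of_le : ∀ r, r ≤ k + 1 → g r = H (k + 1 - r) := fun r hr => if_pos hr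
  have hg_of_lt : ∀ r, k + 1 < r → g r = 0 := fun r hr => if_neg hr.not_ge
  have hg : ∀ r x, x + r < L k + 1 → Δ_[1] (g r) x = g (r + 1) x := by
    intro r x hx
    rcases lt_trichotomy r (k + 1) with hr | rfl | hr
    · have hxL : x ≤ L (k - r) := (by omega : x ≤ L k).trans (hL (Nat.sub_le k r))
      rw [hg_of_le r hr.le, hg_of_le (r + 1) hr, Nat.sub_add_comm (Nat.lt_succ_iff.mp hr),
        Nat.add_sub_add_right]
      exact hH (k - r) x hxL
    · rw [hg_of_le _ le_rfl, hg_of_lt _ (Nat.lt_succ_self _), Nat.sub_self]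
      exact hH₀ x
    · rw [hg_of_lt r hr, hg_of_lt (r + 1) (hr.trans r.lt_succ_self)]
      exact sub_self 0
  calc H (k + 1) (L k + 1) = g 0 (L k + 1) := by rw [hg_of_le 0 (Nat.zero_le _), Nat.sub_zero]
    _ = ∑ r ∈ range (k + 2), (L k + 1).choose r • g r 0 :=
      eq_sum_range_choose_smul_of_fwdDiff_eq hg fun r hr => congrFun (hg_of_lt r hr) 0
    _ = ∑ i ∈ range (k + 2), (L k + 1).choose (k + 1 - i) • g (k + 1 - i) 0 :=
      (sum_flip _).symm
    _ = ∑ i ∈ range (k + 2), (L k + 1).choose (k + 1 - i) • H i 0 :=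
      sum_congr rfl fun i hi => by
        rw [hg_of_le _ (Nat.sub_le _ _), Nat.sub_sub_self (Nat.lt_succ_iff.mp (mem_range.mp hi))]

end NewtonFormula

section Hessenberg

variable {R : Type*} [CommRing R]

theorem det_mul_apply_last_of_vecMul_eq_single {n : ℕ} {M : Matrix (Fin (n + 1)) (Fin (n + 1)) R}
    {v : Fin (n + 1) → R} (h : v ᵥ* M = Pi.single 0 1) :
    M.det * v (Fin.last n) = (-1) ^ n * (M.submatrix Fin.castSucc Fin.succ).det := by
  have hv : M.det • v = M.adjugate.row 0 := by
    rw [← single_one_vecMul, ← h, vecMul_vecMul, mul_adjugate, vecMul_smul, vecMul_one]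
  rw [← smul_eq_mul, ← Pi.smul_apply, hv, row_apply, adjugate_fin_succ_eq_det_submatrix]
  simp [Fin.succAbove_last]

theorem neg_one_pow_mul_det_of_hessenberg {a : ℕ → ℕ → R} (ha_one : ∀ j, a (j + 1) j = 1)
    (ha_zero : ∀ i j, j + 1 < i → a i j = 0) {v : ℕ → R} (hv₀ : v 0 = 1)
    (hv : ∀ j, ∑ i ∈ range (j + 2), v i * a i j = 0) (n : ℕ) :
    (-1) ^ n * (of fun i j : Fin n => a i j).det = v n := by
  -- Prepending `e₀` as a column gives a unitriangular `M` with `v ᵥ* M = e₀`.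
  let M : Matrix (Fin (n + 1)) (Fin (n + 1)) R :=
    of fun i j => Fin.cases (if i = 0 then 1 else 0) (fun j' => a i j') j
  have hM_tri : M.IsUpperTriangular := by
    intro i j hji
    cases j using Fin.cases with
    | zero => exact if_neg (ne_of_gt hji)
    | succ j => exact ha_zero i j (by simpa using Fin.lt_def.mp hji)
  have hM_diag : ∀ i, M i i = 1 := Fin.cases rfl fun i => ha_one i
  have hM_det : M.det = 1 := by simp [det_of_isUpperTriangular hM_tri, hM_diag]
  have hvM : (fun i : Fin (n + 1) => v i) ᵥ* M = Pi.single 0 1 := by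
    funext j
    cases j using Fin.cases with
    | zero => simp [vecMul, dotProduct, M, hv₀]
    | succ j =>
      calc ∑ i : Fin (n + 1), v i * a i j = ∑ i ∈ range (n + 1), v i * a i j :=
            (sum_range fun i => v i * a i j).symm
        _ = ∑ i ∈ range (j + 2), v i * a i j := by
          refine (sum_subset (range_subset_range.mpr (by omega)) fun i _ hi => ?_).symm
          rw [ha_zero i j (by simpa [Nat.succ_le_iff] using hi), mul_zero]
        _ = Pi.single (M := fun _ => R) 0 1 j.succ := by
          rw [hv, Pi.single_eq_of_ne j.succ_ne_zero]
  have hcramer := det_mul_apply_last_of_vecMul_eq_single hvM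
  rw [hM_det, one_mul] at hcramer
  exact hcramer.symm

end Hessenberg

section DiagramPaths

theorem antitone_snoc_iff {α : Type*} [Preorder α] {k : ℕ} {C : Fin k → α} {c : α} :
    Antitone (Fin.snoc C c : Fin (k + 1) → α) ↔ Antitone C ∧ ∀ i, c ≤ C i := by
  simp [Antitone, Fin.forall_fin_succ', forall_and, Fin.le_last]

/-- The lattice paths on the Young diagram with rows `L 0, …, L (k - 1)` that have at least `m`
columns west of each south step, encoded by their column sequences. The lower bound `m` allows a
recursion on the last row, and indexing `L` by `ℕ` lets `k` vary while `L` stays fixed. -/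
def diagramPaths (L : ℕ → ℕ) (k m : ℕ) : Finset (Fin k → ℕ) :=
  {C ∈ Fintype.piFinset fun i : Fin k => Icc m (L i) | Antitone C}

variable {L : ℕ → ℕ} {k m : ℕ}

theorem mem_diagramPaths {C : Fin k → ℕ} :
    C ∈ diagramPaths L k m ↔ (∀ i, m ≤ C i ∧ C i ≤ L i) ∧ Antitone C := by
  simp [diagramPaths]

theorem card_diagramPaths_zero (L : ℕ → ℕ) (m : ℕ) : #(diagramPaths L 0 m) = 1 := by
  simp [diagramPaths, Subsingleton.antitone]

theorem diagramPaths_succ_eq_empty (h : L k < m) : diagramPaths L (k + 1) m = ∅ := by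
  refine eq_empty_of_forall_notMem fun C hC => ?_
  obtain ⟨hm, hL⟩ := (mem_diagramPaths.mp hC).1 (Fin.last k)
  exact (hm.trans hL).not_gt h

theorem snoc_mem_diagramPaths_iff (hm : m ≤ L k) {C : Fin k → ℕ} :
    (Fin.snoc C m : Fin (k + 1) → ℕ) ∈ diagramPaths L (k + 1) m ↔ C ∈ diagramPaths L k m := by
  simp only [mem_diagramPaths, antitone_snoc_iff, Fin.forall_fin_succ', Fin.snoc_castSucc,
    Fin.snoc_last, Fin.val_castSucc, Fin.val_last]
  exact ⟨fun h => ⟨h.1.1, h.2.1⟩, fun h => ⟨⟨h.1, le_rfl, hm⟩, h.2, fun i => (h.1 i).1⟩⟩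

theorem card_diagramPaths_filter_last_eq (hm : m ≤ L k) :
    #{C ∈ diagramPaths L (k + 1) m | C (Fin.last k) = m} = #(diagramPaths L k m) := by
  symm
  refine card_nbij' (fun C => Fin.snoc C m) Fin.init (fun C hC => ?_) (fun C hC => ?_)
    (fun C _ => Fin.init_snoc (α := fun _ => ℕ) m C) (fun C hC => ?_)
  · simpa [snoc_mem_diagramPaths_iff hm] using hC
  · obtain ⟨hC, rfl⟩ := mem_filter.mp hC
    rwa [← Fin.snoc_init_self C, Fin.snoc_last, snoc_mem_diagramPaths_iff hm] at hC
  · obtain ⟨-, rfl⟩ := mem_filter.mp hC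
    exact Fin.snoc_init_self C

theorem diagramPaths_filter_last_ne :
    {C ∈ diagramPaths L (k + 1) m | C (Fin.last k) ≠ m} = diagramPaths L (k + 1) (m + 1) := by
  ext C
  simp only [mem_filter, mem_diagramPaths]
  constructor
  · rintro ⟨⟨hC, hanti⟩, hlast⟩
    have hlt : m < C (Fin.last k) := (hC _).1.lt_of_ne' hlast
    exact ⟨fun i => ⟨hlt.trans_le (hanti i.le_last), (hC i).2⟩, hanti⟩
  · rintro ⟨hC, hanti⟩
    have hlt : m < C (Fin.last k) := Nat.succ_le_iff.mp (hC _).1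
    exact ⟨⟨fun i => ⟨(Nat.le_succ m).trans (hC i).1, (hC i).2⟩, hanti⟩, hlt.ne'⟩

theorem card_diagramPaths_succ (hm : m ≤ L k) :
    #(diagramPaths L (k + 1) m) = #(diagramPaths L k m) + #(diagramPaths L (k + 1) (m + 1)) := by
  rw [← card_diagramPaths_filter_last_eq hm, ← diagramPaths_filter_last_ne,
    card_filter_add_card_filter_not]

theorem sum_neg_one_pow_mul_card_diagramPaths_mul_choose_eq_zero (hL : Antitone L) (k : ℕ) :
    ∑ i ∈ range (k + 2), (-1) ^ i * (#(diagramPaths L i 0) : ℤ) * (L k + 1).choose (k + 1 - i)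
      = 0 := by
  let H : ℕ → ℕ → ℤ := fun k m => (-1) ^ k * #(diagramPaths L k m)
  have hH₀ : ∀ m, Δ_[1] (H 0) m = 0 := fun m => by simp [H, fwdDiff, card_diagramPaths_zero]
  have hH : ∀ k m, m ≤ L k → Δ_[1] (H (k + 1)) m = H k m := fun k m hm => by
    simp only [H, fwdDiff, card_diagramPaths_succ hm]
    push_cast
    ring
  have hnewton := eq_sum_choose_smul_of_fwdDiff_eq_of_antitone hL hH₀ hH k
  have hvanish : H (k + 1) (L k + 1) = 0 := by simp [H, diagramPaths_succ_eq_empty]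
  rw [← hvanish, hnewton]
  exact sum_congr rfl fun i _ => by rw [nsmul_eq_mul, mul_comm]

end DiagramPaths

theorem icho_of_neg (a : ℤ) {b : ℤ} (hb : b < 0) : icho a b = 0 :=
  if_neg fun h => hb.not_ge h.1

theorem icho_natCast (a b : ℕ) : icho a b = a.choose b := by
  by_cases h : b ≤ a
  · simp [icho, h]
  · simp [icho, h, Nat.choose_eq_zero_of_lt (not_le.mp h)]

theorem det_icho_eq_card_diagramPaths {L : ℕ → ℕ} (hL : Antitone L) (k : ℕ) :
    (of fun i j : Fin k => icho ((L j : ℤ) + 1) ((j : ℤ) - (i : ℤ) + 1)).det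
      = #(diagramPaths L k 0) := by
  let a : ℕ → ℕ → ℤ := fun i j => icho (L j + 1) (j - i + 1)
  have ha : ∀ i j, i ≤ j + 1 → a i j = (L j + 1).choose (j + 1 - i) :=
    fun i j h => by
      rw [← icho_natCast, Nat.cast_sub h]
      simp only [a, sub_add_eq_add_sub, Nat.cast_add, Nat.cast_one]
  have ha_one : ∀ j, a (j + 1) j = 1 := fun j => by simp [ha]
  have ha_zero : ∀ i j, j + 1 < i → a i j = 0 := fun i j h => icho_of_neg _ (by omega)
  have hsum : ∀ j, ∑ i ∈ range (j + 2), (-1) ^ i * (#(diagramPaths L i 0) : ℤ) * a i j = 0 := by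
    intro j
    rw [← sum_neg_one_pow_mul_card_diagramPaths_mul_choose_eq_zero hL j]
    exact sum_congr rfl fun i hi => by rw [ha i j (Nat.lt_succ_iff.mp (mem_range.mp hi))]
  have hone : (-1) ^ 0 * (#(diagramPaths L 0 0) : ℤ) = 1 := by simp [card_diagramPaths_zero]
  exact mul_left_cancel₀ (pow_ne_zero k (by norm_num))
    (neg_one_pow_mul_det_of_hessenberg ha_one ha_zero hone hsum k)

theorem exists_antitone_extension_of_fin {α : Type*} [Preorder α] [OrderBot α] {k : ℕ}
    {f : Fin k → α} (hf : Antitone f) : ∃ g : ℕ → α, Antitone g ∧ ∀ i : Fin k, f i = g i := by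
  refine ⟨fun i => if h : i < k then f ⟨i, h⟩ else ⊥, fun i j hij => ?_, fun i => by simp⟩
  by_cases hj : j < k
  · simpa [hj, hij.trans_lt hj] using hf (Fin.mk_le_mk.mpr hij)
  · simp [hj]

/-- (Narayana) The number of lattice paths on the Young diagram of
`lam = (lam 0 ≥ lam 1 ≥ ⋯ ≥ lam (k-1) ≥ 0)`, i.e. of sequences
`C 0 ≥ C 1 ≥ ⋯ ≥ C (k-1) ≥ 0` with `C i ≤ lam i` for all `i`, equals the determinant
of the `k × k` matrix whose `(i,j)` entry is `binom (lam j + 1) (j - i + 1)`. -/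
theorem stmt1 (k : ℕ) (hk : 1 ≤ k) (lam : Fin k → ℕ)
    (hmono : ∀ i j : Fin k, i ≤ j → lam j ≤ lam i) :
    (Nat.card {C : Fin k → ℕ // (∀ i j : Fin k, i ≤ j → C j ≤ C i) ∧ ∀ i, C i ≤ lam i} : ℤ)
      = Matrix.det (Matrix.of fun i j : Fin k =>
          icho ((lam j : ℤ) + 1) ((j : ℤ) - (i : ℤ) + 1)) := by
  obtain ⟨L, hL, hlam⟩ := exists_antitone_extension_of_fin hmono
  simp only [hlam]
  rw [det_icho_eq_card_diagramPaths hL, Nat.subtype_card (diagramPaths L k 0)]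
  intro C
  simp [mem_diagramPaths, Antitone, and_comm]
end

section
/- Fix integers m ≥ 1 and k ≥ 1. Let N'_{m,k}(α,β) be the sum of wt(T) over all Condensed Catalan tableaux T of size (k, k+m) whose shape λ = (λ_1,…,λ_k) satisfies λ_1 = m and λ_k ≥ 1 (first row of length exactly m and exactly k nonzero rows). Then N'_{m,k}(α,β) = α^k β^m Σ_{ℓ=0}^{k} Σ_{j=0}^{m} α^j β^ℓ ( binom(m+ℓ−2+δ_{jm}, m−1)·binom(k+j−2+δ_{ℓk}, k−1) − binom(m+ℓ−2+δ_{jm}, m)·binom(k+j−2+δ_{ℓk}, k) ), where δ_{rs} is the Kronecker delta and binom(a,b) = 0 whenever b < 0 or b > a, the identity holding in ℤ[α,β]. -/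
open scoped Classical
open Finset

/-!
The first row of a tableau is determined by the rows below it and by the number of its α's: only the
columns with no α below are available, the α's fill the rightmost of them, and a single β follows if
one is left. Deleting that row therefore identifies the tableaux with first row of length `D`, with
`j` α's and `l` β's, with the tableaux having one row less, rows of length at most `D`, at most `j`
α's, and `l - 1` or `l` β's according to whether `j < D` or `j = D`.

The Narayana coefficients are Lindström–Gessel–Viennot determinants for pairs of noncrossing lattice
paths. Pascal's rule applied to one path of the pair at a time shows that they satisfy the same
recurrence; the exceptional terms (`j = D`, or a β in every row) are settled by the vanishing of the
determinant when both paths have the same starting point.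
-/

section NoncrossingPaths

/-- The number of lattice paths with `a` east steps and `b` north steps; it is zero as soon as
`a` or `b` is negative. -/
def pathCount (a b : ℤ) : ℤ := icho (a + b) a

theorem pathCount_of_neg_left {a : ℤ} (b : ℤ) (ha : a < 0) : pathCount a b = 0 :=
  if_neg (by omega)

theorem pathCount_of_neg_right (a : ℤ) {b : ℤ} (hb : b < 0) : pathCount a b = 0 :=
  if_neg (by omega)

theorem pathCount_natCast (a b : ℕ) : pathCount a b = (a + b).choose a := by
  rw [pathCount, icho, if_pos (by omega), ← Nat.cast_add, Int.toNat_natCast, Int.toNat_natCast]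

theorem pathCount_comm (a b : ℤ) : pathCount a b = pathCount b a := by
  rcases lt_or_ge a 0 with ha | ha
  · rw [pathCount_of_neg_left b ha, pathCount_of_neg_right b ha]
  rcases lt_or_ge b 0 with hb | hb
  · rw [pathCount_of_neg_right a hb, pathCount_of_neg_left a hb]
  lift a to ℕ using ha
  lift b to ℕ using hb
  rw [pathCount_natCast, pathCount_natCast, Nat.choose_symm_add, add_comm]

theorem pathCount_zero_left {b : ℤ} (hb : 0 ≤ b) : pathCount 0 b = 1 := by
  lift b to ℕ using hb
  simpa only [Nat.choose_zero_right, Nat.cast_one, Nat.cast_zero] using pathCount_natCast 0 b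

theorem pathCount_succ_succ {a b : ℤ} (h : a ≠ -1 ∨ b ≠ -1) :
    pathCount (a + 1) (b + 1) = pathCount a (b + 1) + pathCount (a + 1) b := by
  wlog hab : a ≤ b generalizing a b
  · rw [pathCount_comm, this h.symm (by omega), pathCount_comm b, pathCount_comm _ a, add_comm]
  obtain ha | rfl | ha : a < -1 ∨ a = -1 ∨ 0 ≤ a := by omega
  · simp only [pathCount_of_neg_left _ (show a + 1 < 0 by omega),
      pathCount_of_neg_left _ (show a < 0 by omega), add_zero]
  · rw [neg_add_cancel, pathCount_of_neg_left _ neg_one_lt_zero,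
      pathCount_zero_left (by omega), pathCount_zero_left (by omega), zero_add]
  · lift a to ℕ using ha
    lift b to ℕ using by omega
    have pascal := Nat.choose_succ_succ (a + b + 1) a
    have := pathCount_natCast (a + 1) (b + 1)
    have := pathCount_natCast a (b + 1)
    have := pathCount_natCast (a + 1) b
    grind

/-- The Lindström–Gessel–Viennot determinant counting pairs of noncrossing lattice paths, one with
`a` east and `b` north steps, the other with `d` east and `c` north steps and ending one step
south-east of the first. -/
def noncrossingPairs (a b c d : ℤ) : ℤ :=
  pathCount a b * pathCount c d - pathCount (a + 1) (b - 1) * pathCount (c + 1) (d - 1)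

theorem noncrossingPairs_comm (a b c d : ℤ) :
    noncrossingPairs a b c d = noncrossingPairs c d a b := by
  unfold noncrossingPairs; ring

theorem noncrossingPairs_of_neg_second (a c d : ℤ) {b : ℤ} (hb : b < 0) :
    noncrossingPairs a b c d = 0 := by
  rw [noncrossingPairs, pathCount_of_neg_right _ hb,
    pathCount_of_neg_right _ (show b - 1 < 0 by omega), zero_mul, zero_mul, sub_zero]

theorem noncrossingPairs_of_neg_fourth (a b c : ℤ) {d : ℤ} (hd : d < 0) :
    noncrossingPairs a b c d = 0 := by
  rw [noncrossingPairs_comm, noncrossingPairs_of_neg_second c a b hd]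

theorem noncrossingPairs_zero_zero {a d : ℤ} (ha : 0 ≤ a) (hd : 0 ≤ d) :
    noncrossingPairs a 0 0 d = 1 := by
  rw [noncrossingPairs, pathCount_comm, pathCount_zero_left ha, pathCount_zero_left hd,
    pathCount_of_neg_right _ (show (0 - 1 : ℤ) < 0 by omega), zero_mul, mul_one, sub_zero]

theorem noncrossingPairs_add_left {a b c d : ℤ} (ha : -1 ≤ a) (h : a ≠ -1 ∨ b ≠ -1 ∨ d < 0) :
    noncrossingPairs a (b + 1) c d + noncrossingPairs (a + 1) b c d =
      noncrossingPairs (a + 1) (b + 1) c d := by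
  rcases lt_or_ge d 0 with hd | hd
  · simp only [noncrossingPairs_of_neg_fourth _ _ _ hd, add_zero]
  have outer := pathCount_succ_succ (show a ≠ -1 ∨ b ≠ -1 by omega)
  have inner := pathCount_succ_succ (show a + 1 ≠ -1 ∨ b - 1 ≠ -1 by omega)
  simp only [noncrossingPairs, sub_add_cancel, add_sub_cancel_right] at inner ⊢
  rw [outer, inner]; ring

theorem noncrossingPairs_add_right {a b c d : ℤ} (hc : -1 ≤ c) (h : c ≠ -1 ∨ d ≠ -1 ∨ b < 0) :
    noncrossingPairs a b c (d + 1) + noncrossingPairs a b (c + 1) d =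
      noncrossingPairs a b (c + 1) (d + 1) := by
  simpa only [noncrossingPairs_comm a b] using noncrossingPairs_add_left hc h

theorem noncrossingPairs_eq_zero_of_common_start (a b : ℤ) :
    noncrossingPairs a b (b - 1) (a + 1) = 0 := by
  rw [noncrossingPairs, add_sub_cancel_right, sub_add_cancel, pathCount_comm (b - 1),
    pathCount_comm b]
  ring

theorem noncrossingPairs_succ_fourth_of_ne {a b : ℤ} (ha : a ≠ -1) (hb : 0 ≤ b) :
    noncrossingPairs a b b (a + 1) = noncrossingPairs a b b a := by
  have pascal := noncrossingPairs_add_right (a := a) (b := b) (c := b - 1) (d := a)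
    (by omega) (by omega)
  rwa [noncrossingPairs_eq_zero_of_common_start, sub_add_cancel, zero_add, eq_comm] at pascal

theorem sum_noncrossingPairs (a b : ℤ) {c e : ℤ} (hc : 0 ≤ c) (he : e ≤ 0) (n : ℕ) :
    ∑ i ∈ range (n + 1), noncrossingPairs a b c (i + e) = noncrossingPairs a b (c + 1) (n + e) := by
  induction n with
  | zero =>
    have hlast : noncrossingPairs a b (c + 1) (e - 1) = 0 :=
      noncrossingPairs_of_neg_fourth _ _ _ (by omega)
    have hrec := noncrossingPairs_add_right (a := a) (b := b) (d := e - 1)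
      (show -1 ≤ c by omega) (by omega)
    simpa only [zero_add, range_one, sum_singleton, Nat.cast_zero, hlast, sub_add_cancel, add_zero]
      using hrec
  | succ n ih =>
    rw [sum_range_succ, ih, add_comm, Nat.cast_succ, add_right_comm]
    exact noncrossingPairs_add_right (by omega) (by omega)

end NoncrossingPaths

section Narayana

/-- The coefficient of `α ^ (k + j) * β ^ (m + l)` in the α/β-Narayana polynomial `N'_{m,k}`. -/
def alphaBetaNarayana (k m j l : ℕ) : ℤ :=
  icho ((m : ℤ) + (l : ℤ) - 2 + (if j = m then 1 else 0)) ((m : ℤ) - 1) *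
      icho ((k : ℤ) + (j : ℤ) - 2 + (if l = k then 1 else 0)) ((k : ℤ) - 1) -
    icho ((m : ℤ) + (l : ℤ) - 2 + (if j = m then 1 else 0)) (m : ℤ) *
      icho ((k : ℤ) + (j : ℤ) - 2 + (if l = k then 1 else 0)) (k : ℤ)

theorem alphaBetaNarayana_eq_noncrossingPairs (k m j l : ℕ) :
    alphaBetaNarayana k m j l = noncrossingPairs (m - 1) (l - 1 + if j = m then 1 else 0)
      (k - 1) (j - 1 + if l = k then 1 else 0) := by
  unfold alphaBetaNarayana noncrossingPairs pathCount
  ring_nf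

theorem alphaBetaNarayana_succ_of_lt {k m j l : ℕ} (hj : j < m) :
    alphaBetaNarayana (k + 1) m j l =
      noncrossingPairs (m - 1) (l - 1) k (j - 1 + if l = k + 1 then 1 else 0) := by
  rw [alphaBetaNarayana_eq_noncrossingPairs, if_neg hj.ne, add_zero]
  simp only [Nat.cast_succ, add_sub_cancel_right]

theorem alphaBetaNarayana_zero_right {k m j : ℕ} (hj : j < m) :
    alphaBetaNarayana (k + 1) m j 0 = 0 := by
  rw [alphaBetaNarayana_succ_of_lt hj, noncrossingPairs_of_neg_second _ _ _ (by simp)]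

theorem alphaBetaNarayana_diag (k m : ℕ) : alphaBetaNarayana k m m k = 0 := by
  rw [alphaBetaNarayana_eq_noncrossingPairs, if_pos rfl, if_pos rfl]
  simpa only [sub_add_cancel] using noncrossingPairs_eq_zero_of_common_start (m - 1) k

theorem alphaBetaNarayana_succ {k m j l : ℕ} (hm : 1 ≤ m) (hj : j ≤ m) (hl : l ≤ k) :
    alphaBetaNarayana (k + 1) m j (l + if j < m then 1 else 0) =
      noncrossingPairs (m - 1) l k (j - 1 + if l = k then 1 else 0) := by
  rcases hj.lt_or_eq with hj | rfl
  · rw [if_pos hj, alphaBetaNarayana_succ_of_lt hj]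
    simp only [Nat.cast_succ, add_sub_cancel_right, Nat.add_right_cancel_iff]
  rw [alphaBetaNarayana_eq_noncrossingPairs, if_pos rfl, if_neg (lt_irrefl j), add_zero,
    if_neg (show l ≠ k + 1 by omega), sub_add_cancel, add_zero, Nat.cast_succ, add_sub_cancel_right]
  split_ifs with hlk
  · rw [hlk, noncrossingPairs_succ_fourth_of_ne (by omega) (by omega)]
  · rw [add_zero]

theorem sum_alphaBetaNarayana_row {k m j l : ℕ} (hk : 1 ≤ k) (hj : j ≤ m) :
    ∑ i ∈ range (j + 1), alphaBetaNarayana k (m + 1) i l =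
      noncrossingPairs m (l - 1) k (j - 1 + if l = k then 1 else 0) := by
  have hterm : ∀ i ∈ range (j + 1), alphaBetaNarayana k (m + 1) i l =
      noncrossingPairs m (l - 1) (k - 1) (i + (-1 + if l = k then 1 else 0)) := by
    intro i hi
    rw [alphaBetaNarayana_eq_noncrossingPairs, if_neg (by grind), Nat.cast_succ,
      add_sub_cancel_right, add_zero]
    ring_nf
  rw [sum_congr rfl hterm, sum_noncrossingPairs _ _ (by omega) (by split_ifs <;> omega)]
  ring_nf

theorem sum_alphaBetaNarayana {k l : ℕ} (hk : 1 ≤ k) {m j : ℕ} (hj : j ≤ m) :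
    ∑ p ∈ Icc 1 m, ∑ i ∈ range (min p j + 1), alphaBetaNarayana k p i l =
      noncrossingPairs (m - 1) l k (j - 1 + if l = k then 1 else 0) := by
  have hstep (n i : ℕ) (hi : i ≤ n) :
      noncrossingPairs (n - 1) l k (i - 1 + if l = k then 1 else 0) +
          ∑ t ∈ range (i + 1), alphaBetaNarayana k (n + 1) t l =
        noncrossingPairs n l k (i - 1 + if l = k then 1 else 0) := by
    rw [sum_alphaBetaNarayana_row hk hi]
    simpa only [sub_add_cancel] using noncrossingPairs_add_left
      (a := n - 1) (b := l - 1) (c := k) (d := i - 1 + if l = k then 1 else 0)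
      (by omega) (by grind)
  induction m generalizing j with
  | zero =>
    obtain rfl : j = 0 := by omega
    rw [noncrossingPairs, Icc_eq_empty (by omega), sum_empty, pathCount_of_neg_left _ (by simp),
      pathCount_of_neg_right (k + 1) (by split_ifs <;> simp), zero_mul, mul_zero, sub_zero]
  | succ m ih =>
    rw [sum_Icc_succ_top (by omega), Nat.cast_succ, add_sub_cancel_right, min_eq_right hj]
    rcases Nat.le_succ_iff.mp hj with hjm | rfl
    · rw [ih hjm, hstep m j hjm]
    have hmin : ∑ p ∈ Icc 1 m, ∑ i ∈ range (min p (m + 1) + 1), alphaBetaNarayana k p i l =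
        ∑ p ∈ Icc 1 m, ∑ i ∈ range (min p m + 1), alphaBetaNarayana k p i l :=
      sum_congr rfl fun p hp ↦ by
        rw [min_eq_left (mem_Icc.mp hp).2, min_eq_left (by grind)]
    rw [hmin, ih le_rfl, sum_range_succ, ← add_assoc, hstep m m le_rfl,
      alphaBetaNarayana_eq_noncrossingPairs, if_pos rfl]
    have := noncrossingPairs_add_right (a := m) (b := l) (c := k - 1)
      (d := m - 1 + if l = k then 1 else 0) (by omega) (by omega)
    grind

end Narayana

section TopRow

variable {w : ℕ}

/-- The condition that the columns below impose on the top row of a tableau: `S` is the set of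
columns of the row with no α below it. -/
def IsTopRow (S : Finset (Fin w)) (r : Fin w → Option Bool) : Prop :=
  (∀ c, c ∉ S → r c = none) ∧ (∀ c c', r c = some false → c' < c → r c' = none) ∧
  (∀ c ∈ S, (∀ c', c < c' → r c' ≠ some false) → r c ≠ none)

/-- The number of boxes of a row containing an α (`b = true`) or a β (`b = false`). -/
def rowCount (b : Bool) (r : Fin w → Option Bool) : ℕ := #{c | r c = some b}

theorem rowCount_const_none (b : Bool) : rowCount b (fun _ : Fin w ↦ none) = 0 := by
  simp only [rowCount, reduceCtorEq, filter_false, card_empty]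

theorem rowCount_update {r : Fin w → Option Bool} {a : Fin w} (ha : r a = none) (x b : Bool) :
    rowCount b (Function.update r a (some x)) = rowCount b r + if x = b then 1 else 0 := by
  simp only [rowCount, card_filter, Function.update_apply]
  rw [← add_sum_erase _ _ (mem_univ a), ← add_sum_erase univ _ (mem_univ a)]
  simp only [if_true, ha, Option.some.injEq, reduceCtorEq, if_false, zero_add]
  rw [add_comm]
  congr 1
  exact sum_congr rfl fun c hc ↦ by rw [if_neg (ne_of_mem_erase hc)]

theorem isTopRow_empty_iff {r : Fin w → Option Bool} : IsTopRow ∅ r ↔ r = fun _ ↦ none :=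
  ⟨fun h ↦ funext fun c ↦ h.1 c (notMem_empty c), by rintro rfl; simp [IsTopRow]⟩

theorem isTopRow_insert_max_iff {S : Finset (Fin w)} {a : Fin w} (ha : ∀ c ∈ S, c < a)
    {r : Fin w → Option Bool} :
    IsTopRow (insert a S) r ↔ r = Function.update (fun _ ↦ none) a (some false) ∨
      ∃ r', IsTopRow S r' ∧ r = Function.update r' a (some true) := by
  constructor
  · rintro ⟨hS, hβ, hfull⟩
    have hgt (c : Fin w) (hc : a < c) : r c = none := hS c (by grind)
    have hane : r a ≠ none := hfull a (by simp) (by grind)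
    rcases hra : r a with _ | _ | _
    · exact absurd hra hane
    · left
      funext c
      grind
    · refine Or.inr ⟨Function.update r a none, ⟨?_, ?_, ?_⟩, ?_⟩ <;> grind
  · rintro (rfl | ⟨r', ⟨hS, hβ, hfull⟩, rfl⟩) <;> refine ⟨?_, ?_, ?_⟩ <;> grind

theorem existsUnique_isTopRow (S : Finset (Fin w)) {t : ℕ} (ht : t ≤ #S) :
    ∃! r, IsTopRow S r ∧ rowCount true r = t := by
  induction S using Finset.induction_on_max generalizing t with
  | empty =>
    obtain rfl : t = 0 := by simpa only [card_empty, nonpos_iff_eq_zero] using ht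
    exact ⟨_, ⟨isTopRow_empty_iff.mpr rfl, rowCount_const_none true⟩,
      fun r hr ↦ isTopRow_empty_iff.mp hr.1⟩
  | insert a S ha ih =>
    have haS : a ∉ S := fun h ↦ lt_irrefl _ (ha a h)
    have hα {r : Fin w → Option Bool} (hr : IsTopRow S r) :
        rowCount true (Function.update r a (some true)) = rowCount true r + 1 :=
      rowCount_update (hr.1 a haS) true true
    have hβ : rowCount true (Function.update (fun _ ↦ none) a (some false)) = 0 := by
      simp [rowCount_update, rowCount_const_none]
    rw [card_insert_of_notMem haS] at ht
    simp only [isTopRow_insert_max_iff ha]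
    cases t with
    | zero =>
      refine ⟨_, ⟨Or.inl rfl, hβ⟩, ?_⟩
      rintro _ ⟨rfl | ⟨r, hr, rfl⟩, hcount⟩
      · rfl
      · rw [hα hr] at hcount
        omega
    | succ t =>
      obtain ⟨r, ⟨hr, hrt⟩, huniq⟩ := ih (Nat.le_of_succ_le_succ ht)
      refine ⟨_, ⟨Or.inr ⟨r, hr, rfl⟩, by rw [hα hr, hrt]⟩, ?_⟩
      rintro _ ⟨rfl | ⟨r', hr', rfl⟩, hcount⟩
      · omega
      · rw [hα hr', Nat.add_right_cancel_iff] at hcount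
        rw [huniq r' ⟨hr', hcount⟩]

theorem IsTopRow.rowCount_false {S : Finset (Fin w)} {r : Fin w → Option Bool}
    (hr : IsTopRow S r) : rowCount false r = if rowCount true r < #S then 1 else 0 := by
  induction S using Finset.induction_on_max generalizing r with
  | empty => simp [isTopRow_empty_iff.mp hr, rowCount_const_none]
  | insert a S ha ih =>
    have haS : a ∉ S := fun h ↦ lt_irrefl _ (ha a h)
    rw [card_insert_of_notMem haS]
    rcases (isTopRow_insert_max_iff ha).mp hr with rfl | ⟨r, hr', rfl⟩
    · simp [rowCount_update, rowCount_const_none]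
    · simp [rowCount_update (hr'.1 a haS), ih hr']

end TopRow

section Tableaux

variable {k w : ℕ}

/-- A pair consisting of a shape with `k` rows of length at most `w` and a filling of the
`k × w` rectangle; the ambient finite type in which tableaux are counted. -/
abbrev FilledShape (k w : ℕ) : Type := (Fin k → Fin (w + 1)) × (Fin k → Fin w → Option Bool)

/-- Deletion of the first row. -/
def FilledShape.tail (T : FilledShape (k + 1) w) : FilledShape k w := (Fin.tail T.1, Fin.tail T.2)

theorem FilledShape.ext_of_tail {T U : FilledShape (k + 1) w} (htail : T.tail = U.tail)
    (hlen : T.1 0 = U.1 0) (hrow : T.2 0 = U.2 0) : T = U := by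
  rw [FilledShape.tail, FilledShape.tail, Prod.mk.injEq] at htail
  refine Prod.ext ?_ ?_
  · rw [← Fin.cons_self_tail T.1, ← Fin.cons_self_tail U.1, htail.1, hlen]
  · rw [← Fin.cons_self_tail T.2, ← Fin.cons_self_tail U.2, htail.2, hrow]

/-- The Condensed Catalan tableaux with exactly `k` nonzero rows, all of length at most `w`. -/
noncomputable def tableaux (k w : ℕ) : Finset (FilledShape k w) :=
  {T | (∀ i j : Fin k, i ≤ j → (T.1 j : ℕ) ≤ (T.1 i : ℕ)) ∧ (∀ i : Fin k, 1 ≤ (T.1 i : ℕ)) ∧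
    IsCCT k w (fun i ↦ (T.1 i : ℕ)) T.2}

/-- The columns among the first `D` that contain no α. -/
def alphaFreeCols (D : ℕ) (F : Fin k → Fin w → Option Bool) : Finset (Fin w) :=
  {c | (c : ℕ) < D ∧ ∀ i, F i c ≠ some true}

theorem aCount_succ (F : Fin (k + 1) → Fin w → Option Bool) :
    aCount (k + 1) w F = rowCount true (F 0) + aCount k w (Fin.tail F) := by
  simp only [aCount, rowCount, card_filter, Fintype.sum_prod_type, Fin.sum_univ_succ]
  rfl

theorem bCount_succ (F : Fin (k + 1) → Fin w → Option Bool) :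
    bCount (k + 1) w F = rowCount false (F 0) + bCount k w (Fin.tail F) := by
  simp only [bCount, rowCount, card_filter, Fintype.sum_prod_type, Fin.sum_univ_succ]
  rfl

theorem isCCT_succ_iff {lam : Fin (k + 1) → ℕ} {F : Fin (k + 1) → Fin w → Option Bool} :
    IsCCT (k + 1) w lam F ↔
      IsCCT k w (Fin.tail lam) (Fin.tail F) ∧
        IsTopRow (alphaFreeCols (lam 0) (Fin.tail F)) (F 0) := by
  simp only [IsCCT, IsTopRow, alphaFreeCols, Fin.forall_fin_succ, Fin.tail,
    Fin.succ_lt_succ_iff, Fin.not_lt_zero, Fin.succ_pos, lt_self_iff_false]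
  constructor
  · rintro ⟨⟨hout₀, hout⟩, ⟨hβ₀, hβ⟩, hα, hfull₀, hfull⟩
    refine ⟨⟨hout, hβ, ?_, ?_⟩, ?_, hβ₀, ?_⟩ <;> grind
  · rintro ⟨⟨hout, hβ, hα, hfull⟩, hout₀, hβ₀, hfull₀⟩
    refine ⟨⟨?_, hout⟩, ⟨hβ₀, hβ⟩, ?_, ?_, ?_⟩ <;> grind

theorem mem_tableaux_succ {T : FilledShape (k + 1) w} :
    T ∈ tableaux (k + 1) w ↔ T.tail ∈ tableaux k w ∧
      (1 ≤ (T.1 0 : ℕ) ∧ ∀ i, (T.tail.1 i : ℕ) ≤ T.1 0) ∧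
      IsTopRow (alphaFreeCols (T.1 0) T.tail.2) (T.2 0) := by
  simp only [tableaux, mem_filter, mem_univ, true_and, isCCT_succ_iff, FilledShape.tail,
    Fin.forall_fin_succ, Fin.tail_def, Fin.succ_le_succ_iff, Fin.zero_le]
  grind

theorem card_alphaFreeCols {lam : Fin k → ℕ} {F : Fin k → Fin w → Option Bool}
    (hF : IsCCT k w lam F) {D : ℕ} (hlam : ∀ i, lam i ≤ D) (hD : D ≤ w) :
    #(alphaFreeCols D F) + aCount k w F = D := by
  obtain ⟨hout, -, hα, -⟩ := hF
  have hcols : aCount k w F = #{c : Fin w | (c : ℕ) < D ∧ ¬ ∀ i, F i c ≠ some true} := by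
    refine card_nbij Prod.snd ?_ ?_ ?_
    · rintro ⟨i, c⟩ hp
      grind
    · rintro ⟨i, c⟩ hp ⟨i', c'⟩ hp' hcc
      rcases lt_trichotomy i i' with hi | hi | hi <;> grind
    · intro c hc
      simp only [ne_eq, not_forall, not_not, coe_filter, mem_univ, true_and,
        Set.mem_ofPred_eq] at hc
      obtain ⟨-, i, hi⟩ := hc
      exact ⟨(i, c), by simpa using hi, rfl⟩
  rw [hcols, alphaFreeCols, ← filter_filter, ← filter_filter, card_filter_add_card_filter_not,
    Fin.card_filter_val_lt, min_eq_right hD]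

theorem IsCCT.bCount_le {lam : Fin k → ℕ} {F : Fin k → Fin w → Option Bool}
    (hF : IsCCT k w lam F) : bCount k w F ≤ k := by
  obtain ⟨-, hβ, -⟩ := hF
  calc bCount k w F ≤ #(univ : Finset (Fin k)) := by
        refine card_le_card_of_injOn Prod.fst (fun _ _ ↦ mem_univ _) ?_
        rintro ⟨i, c⟩ hc ⟨i', c'⟩ hc' hii
        rcases lt_trichotomy c c' with h | h | h <;> grind
    _ = k := card_fin k

/-- The tableaux in which every row has length at most `D` and which contain at most `j` α's and
exactly `l` β's. -/
noncomputable def tableauxWithin (k w D j l : ℕ) : Finset (FilledShape k w) :=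
  {T ∈ tableaux k w | (∀ i, (T.1 i : ℕ) ≤ D) ∧ aCount k w T.2 ≤ j ∧ bCount k w T.2 = l}

/-- The tableaux with `k + 1` rows, the first of length `D`, and with `j` α's and `l` β's. -/
noncomputable def tableauxWithFirstRow (k w D j l : ℕ) : Finset (FilledShape (k + 1) w) :=
  {T ∈ tableaux (k + 1) w |
    (T.1 0 : ℕ) = D ∧ aCount (k + 1) w T.2 = j ∧ bCount (k + 1) w T.2 = l}

theorem mem_tableauxWithFirstRow_iff {D j l : ℕ} (hD₁ : 1 ≤ D) (hDw : D ≤ w)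
    {T : FilledShape (k + 1) w} :
    T ∈ tableauxWithFirstRow k w D j l ↔
      (T.tail ∈ tableaux k w ∧ (∀ i, (T.tail.1 i : ℕ) ≤ D) ∧
        bCount k w T.tail.2 + (if j < D then 1 else 0) = l) ∧ (T.1 0 : ℕ) = D ∧
      IsTopRow (alphaFreeCols D T.tail.2) (T.2 0) ∧
      rowCount true (T.2 0) + aCount k w T.tail.2 = j := by
  have hcols (htail : T.tail ∈ tableaux k w) (hlen : ∀ i, (T.tail.1 i : ℕ) ≤ D) :=
    card_alphaFreeCols (mem_filter.mp htail).2.2.2 hlen hDw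
  rw [tableauxWithFirstRow, mem_filter, mem_tableaux_succ, aCount_succ, bCount_succ]
  change _ ∧ _ ∧ _ + aCount k w T.tail.2 = _ ∧ _ + bCount k w T.tail.2 = _ ↔ _
  constructor
  · rintro ⟨⟨htail, ⟨-, hlen⟩, hrow⟩, rfl, hα, hβ⟩
    rw [hrow.rowCount_false] at hβ
    grind
  · rintro ⟨⟨htail, hlen, hβ⟩, rfl, hrow, hα⟩
    have := hrow.rowCount_false
    grind

theorem card_tableauxWithFirstRow {D j : ℕ} (l : ℕ) (hD₁ : 1 ≤ D) (hDw : D ≤ w) (hj : j ≤ D) :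
    #(tableauxWithFirstRow k w D j (l + if j < D then 1 else 0)) = #(tableauxWithin k w D j l) := by
  refine card_nbij FilledShape.tail ?_ ?_ ?_
  · intro T hT
    rw [mem_coe, mem_tableauxWithFirstRow_iff hD₁ hDw] at hT
    rw [mem_coe, tableauxWithin, mem_filter]
    exact ⟨hT.1.1, hT.1.2.1, by omega, by omega⟩
  · intro T hT U hU htail
    rw [mem_coe, mem_tableauxWithFirstRow_iff hD₁ hDw] at hT hU
    obtain ⟨⟨hmem, hlen, -⟩, hTD, hTrow, hTα⟩ := hT
    obtain ⟨-, hUD, hUrow, hUα⟩ := hU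
    have hcols := card_alphaFreeCols (mem_filter.mp hmem).2.2.2 hlen hDw
    rw [← htail] at hUrow hUα
    refine FilledShape.ext_of_tail htail (Fin.ext (hTD.trans hUD.symm)) ?_
    exact (existsUnique_isTopRow _ (by omega)).unique
      ⟨hTrow, eq_tsub_of_add_eq hTα⟩ ⟨hUrow, eq_tsub_of_add_eq hUα⟩
  · intro T hT
    rw [mem_coe, tableauxWithin, mem_filter] at hT
    obtain ⟨hmem, hlen, hα, hβ⟩ := hT
    have hcols := card_alphaFreeCols (mem_filter.mp hmem).2.2.2 hlen hDw
    obtain ⟨r, ⟨hrow, hr⟩, -⟩ := existsUnique_isTopRow (alphaFreeCols D T.2)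
      (t := j - aCount k w T.2) (by omega)
    refine ⟨(Fin.cons ⟨D, by omega⟩ T.1, Fin.cons r T.2), ?_, rfl⟩
    rw [mem_coe, mem_tableauxWithFirstRow_iff hD₁ hDw]
    exact ⟨⟨hmem, hlen, by rw [← hβ]; rfl⟩, rfl, hrow, by rw [← Nat.sub_add_cancel hα, ← hr]; rfl⟩

theorem tableauxWithFirstRow_zero_right {D j : ℕ} (hD₁ : 1 ≤ D) (hDw : D ≤ w) (hj : j < D) :
    tableauxWithFirstRow k w D j 0 = ∅ := by
  refine eq_empty_of_forall_notMem fun T hT ↦ ?_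
  have := ((mem_tableauxWithFirstRow_iff hD₁ hDw).mp hT).1.2.2
  rw [if_pos hj] at this
  omega

theorem tableauxWithin_eq_empty {D j l : ℕ} (hl : k < l) : tableauxWithin k w D j l = ∅ := by
  refine eq_empty_of_forall_notMem fun T hT ↦ ?_
  obtain ⟨hmem, -, -, hβ⟩ := mem_filter.mp hT
  have := (mem_filter.mp hmem).2.2.2.bCount_le
  omega

theorem card_tableauxWithin_zero_rows (w D j : ℕ) : #(tableauxWithin 0 w D j 0) = 1 := by
  rw [card_eq_one]
  refine ⟨default, eq_singleton_iff_unique_mem.mpr ⟨?_, fun _ _ ↦ Subsingleton.elim _ _⟩⟩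
  simp [tableauxWithin, tableaux, IsCCT, aCount, bCount]

theorem forall_length_le_iff {T : FilledShape (k + 1) w} (hT : T ∈ tableaux (k + 1) w) {D : ℕ} :
    (∀ i, (T.1 i : ℕ) ≤ D) ↔ (T.1 0 : ℕ) ≤ D :=
  ⟨fun h ↦ h 0, fun h i ↦ ((mem_filter.mp hT).2.1 0 i (Fin.zero_le i)).trans h⟩

theorem aCount_le_first_length {T : FilledShape (k + 1) w} (hT : T ∈ tableaux (k + 1) w) :
    aCount (k + 1) w T.2 ≤ T.1 0 := by
  have := card_alphaFreeCols (mem_filter.mp hT).2.2.2 ((forall_length_le_iff hT).mpr le_rfl)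
    (Fin.is_le _)
  omega

theorem card_tableauxWithin_succ (D j l : ℕ) :
    #(tableauxWithin (k + 1) w D j l) =
      ∑ p ∈ Icc 1 D, ∑ i ∈ range (min p j + 1), #(tableauxWithFirstRow k w p i l) := by
  rw [sum_sigma', card_eq_sum_card_fiberwise (t := (Icc 1 D).sigma fun p ↦ range (min p j + 1))
    (f := fun T ↦ (⟨T.1 0, aCount (k + 1) w T.2⟩ : Σ _ : ℕ, ℕ))]
  · refine sum_congr rfl ?_
    rintro ⟨p, i⟩ hpi
    congr 1
    ext T
    simp only [tableauxWithin, tableauxWithFirstRow, mem_filter, Sigma.mk.injEq, heq_eq_eq,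
      mem_sigma, mem_Icc, mem_range] at hpi ⊢
    have := forall_length_le_iff (T := T) (D := D)
    grind
  · intro T hT
    obtain ⟨hmem, hlen, hα, -⟩ := mem_filter.mp (mem_coe.mp hT)
    have hpos := (mem_filter.mp hmem).2.2.1 0
    have := hlen 0
    have := aCount_le_first_length hmem
    simp only [coe_sigma, Set.mem_sigma_iff, mem_coe, mem_Icc, mem_range]
    omega

end Tableaux

section GeneratingFunction

theorem card_tableauxWithFirstRow_eq_of_card_tableauxWithin_eq {k w D j : ℕ} (hD₁ : 1 ≤ D)
    (hDw : D ≤ w) (hj : j ≤ D)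
    (hwithin : ∀ l ≤ k, (#(tableauxWithin k w D j l) : ℤ) =
      noncrossingPairs (D - 1) l k (j - 1 + if l = k then 1 else 0)) {l : ℕ} (hl : l ≤ k + 1) :
    (#(tableauxWithFirstRow k w D j l) : ℤ) = alphaBetaNarayana (k + 1) D j l := by
  have hshift (l' : ℕ) (hl' : l' ≤ k) :
      (#(tableauxWithFirstRow k w D j (l' + if j < D then 1 else 0)) : ℤ) =
        alphaBetaNarayana (k + 1) D j (l' + if j < D then 1 else 0) := by
    rw [card_tableauxWithFirstRow l' hD₁ hDw hj, hwithin l' hl', alphaBetaNarayana_succ hD₁ hj hl']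
  rcases hj.lt_or_eq with hjD | rfl
  · cases l with
    | zero =>
      rw [tableauxWithFirstRow_zero_right hD₁ hDw hjD, alphaBetaNarayana_zero_right hjD,
        card_empty, Nat.cast_zero]
    | succ l => simpa only [if_pos hjD] using hshift l (Nat.le_of_succ_le_succ hl)
  · have hcard := card_tableauxWithFirstRow (k := k) l hD₁ hDw le_rfl
    rw [if_neg (lt_irrefl j), add_zero] at hcard
    rcases Nat.le_succ_iff.mp hl with hlk | rfl
    · simpa only [lt_irrefl, if_false, add_zero] using hshift l hlk
    · rw [hcard, tableauxWithin_eq_empty k.lt_succ_self, alphaBetaNarayana_diag, card_empty,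
        Nat.cast_zero]

theorem card_tableauxWithin_eq_noncrossingPairs {k w D j l : ℕ} (hD₁ : 1 ≤ D) (hDw : D ≤ w)
    (hj : j ≤ D) (hl : l ≤ k) :
    (#(tableauxWithin k w D j l) : ℤ) =
      noncrossingPairs (D - 1) l k (j - 1 + if l = k then 1 else 0) := by
  induction k generalizing D j l with
  | zero =>
    obtain rfl : l = 0 := by omega
    rw [card_tableauxWithin_zero_rows, if_pos rfl, sub_add_cancel, Nat.cast_zero, Nat.cast_one,
      noncrossingPairs_zero_zero (by omega) (by omega)]
  | succ k ih =>
    rw [card_tableauxWithin_succ, ← sum_alphaBetaNarayana k.succ_pos hj]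
    push_cast
    refine sum_congr rfl fun p hp ↦ sum_congr rfl fun i hi ↦ ?_
    obtain ⟨hp₁, hpD⟩ := mem_Icc.mp hp
    have hip : i ≤ p := (mem_range_succ_iff.mp hi).trans (min_le_left p j)
    have hpw : p ≤ w := hpD.trans hDw
    exact card_tableauxWithFirstRow_eq_of_card_tableauxWithin_eq hp₁ hpw hip
      (fun _ hl' ↦ ih hp₁ hpw hip hl') hl

theorem card_tableauxWithFirstRow_eq_alphaBetaNarayana {k w D j l : ℕ} (hD₁ : 1 ≤ D)
    (hDw : D ≤ w) (hj : j ≤ D) (hl : l ≤ k + 1) :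
    (#(tableauxWithFirstRow k w D j l) : ℤ) = alphaBetaNarayana (k + 1) D j l :=
  card_tableauxWithFirstRow_eq_of_card_tableauxWithin_eq hD₁ hDw hj
    (fun _ hl' ↦ card_tableauxWithin_eq_noncrossingPairs hD₁ hDw hj hl') hl

theorem stmt4_general {R : Type*} [CommRing R] (α β : R) {m k : ℕ} (hm : 1 ≤ m) (hk : 1 ≤ k) :
    ∑ T ∈ tableaux k m with (T.1 ⟨0, hk⟩ : ℕ) = m,
        α ^ (k + aCount k m T.2) * β ^ (m + bCount k m T.2) =
      α ^ k * β ^ m * ∑ l ∈ range (k + 1), ∑ j ∈ range (m + 1),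
        α ^ j * β ^ l * (alphaBetaNarayana k m j l : R) := by
  obtain ⟨k, rfl⟩ : ∃ n, k = n + 1 := ⟨k - 1, by omega⟩
  have hmaps : ∀ T ∈ ({T ∈ tableaux (k + 1) m | (T.1 ⟨0, hk⟩ : ℕ) = m} : Finset _),
      (bCount (k + 1) m T.2, aCount (k + 1) m T.2) ∈ range (k + 2) ×ˢ range (m + 1) := by
    intro T hT
    have hmem := (mem_filter.mp hT).1
    have hα := (aCount_le_first_length hmem).trans (Fin.is_le _)
    have hβ := (mem_filter.mp hmem).2.2.2.bCount_le
    exact mem_product.mpr ⟨mem_range_succ_iff.mpr hβ, mem_range_succ_iff.mpr hα⟩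
  rw [← sum_fiberwise_of_maps_to' hmaps
    (fun p ↦ α ^ (k + 1 + p.2) * β ^ (m + p.1)), mul_sum, sum_product]
  simp only [mul_sum]
  refine sum_congr rfl fun l hl ↦ sum_congr rfl fun j hj ↦ ?_
  have hfiber : (({T ∈ tableaux (k + 1) m | (T.1 ⟨0, hk⟩ : ℕ) = m} : Finset _).filter fun T ↦
      (bCount (k + 1) m T.2, aCount (k + 1) m T.2) = (l, j)) = tableauxWithFirstRow k m m j l := by
    ext T
    rw [mem_filter, mem_filter, tableauxWithFirstRow, mem_filter, Prod.mk.injEq]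
    exact ⟨fun ⟨⟨hT, hlen⟩, hβ, hα⟩ ↦ ⟨hT, hlen, hα, hβ⟩,
      fun ⟨hT, hlen, hα, hβ⟩ ↦ ⟨⟨hT, hlen⟩, hβ, hα⟩⟩
  rw [sum_const, hfiber, ← card_tableauxWithFirstRow_eq_alphaBetaNarayana hm le_rfl
    (mem_range_succ_iff.mp hj) (mem_range_succ_iff.mp hl), Int.cast_natCast, nsmul_eq_mul]
  ring

end GeneratingFunction

/-- `N'_{m,k}(α,β)`, the weight generating function of Condensed Catalan tableaux of
size `(k, k+m)` whose shape has first row exactly `m` and exactly `k` nonzero rows,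
equals the α/β-Narayana expression of Theorem 5.1. Here a tableau is a pair
`(shape, filling)` and its weight is `α^(k+j) β^(m+ℓ)` where `j, ℓ` are the numbers
of α's and β's in the filling; `α = X 0`, `β = X 1` in `ℤ[α,β]`. -/
theorem stmt4 (m k : ℕ) (hm : 1 ≤ m) (hk : 1 ≤ k) :
    ∑ pr ∈ Finset.univ.filter
        (fun pr : (Fin k → Fin (m + 1)) × (Fin k → Fin m → Option Bool) =>
          (∀ i j : Fin k, i ≤ j → (pr.1 j : ℕ) ≤ (pr.1 i : ℕ)) ∧
          (pr.1 ⟨0, hk⟩ : ℕ) = m ∧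
          (∀ i : Fin k, 1 ≤ (pr.1 i : ℕ)) ∧
          IsCCT k m (fun i => (pr.1 i : ℕ)) pr.2),
        (MvPolynomial.X 0 : MvPolynomial (Fin 2) ℤ) ^ (k + aCount k m pr.2) *
          MvPolynomial.X 1 ^ (m + bCount k m pr.2)
      = MvPolynomial.X 0 ^ k * MvPolynomial.X 1 ^ m *
        ∑ l ∈ Finset.range (k + 1), ∑ j ∈ Finset.range (m + 1),
          MvPolynomial.X 0 ^ j * MvPolynomial.X 1 ^ l *
          ((icho ((m : ℤ) + (l : ℤ) - 2 + (if j = m then 1 else 0)) ((m : ℤ) - 1) *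
              icho ((k : ℤ) + (j : ℤ) - 2 + (if l = k then 1 else 0)) ((k : ℤ) - 1) -
            icho ((m : ℤ) + (l : ℤ) - 2 + (if j = m then 1 else 0)) (m : ℤ) *
              icho ((k : ℤ) + (j : ℤ) - 2 + (if l = k then 1 else 0)) (k : ℤ) : ℤ) :
            MvPolynomial (Fin 2) ℤ) := by
  simpa only [tableaux, filter_filter, and_assoc, and_comm, and_left_comm, alphaBetaNarayana] using
    stmt4_general (MvPolynomial.X 0 : MvPolynomial (Fin 2) ℤ) (MvPolynomial.X 1) hm hk
end

section
/- (Derrida's partition function formula) Fix an integer n ≥ 1 and let Z_n(α,β) = Σ_{k=0}^{n} N_{n−k,k}(α,β) be the sum of wt(T) over all Condensed Catalan tableaux of size (k,n) for all 0 ≤ k ≤ n. Then Z_n(α,β) = Σ_{p=1}^{n} b(n,p) · Σ_{i=0}^{p} α^{n−i} β^{n−p+i}, where b(n,p) = (p/(2n−p))·binom(2n−p, n) (a ballot number, which is a positive integer); equivalently, (2n−p)·b(n,p) = p·binom(2n−p, n) for each p. The identity holds in ℤ[α,β]. -/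
open scoped Classical
open Finset

/-!
Remove the top row of a tableau when it has maximal length, and the last column when no row
reaches it. Only the α-free columns below matter for the possible fillings of a full top row, so
with `X` marking the free columns, adding such a row is a linear operator `D` on polynomials in
`X`, adding an empty column is multiplication `E` by `X`, and the generating polynomial of all
tableaux with `n` rows and columns in total is `(D + E)ⁿ 1`. These operators satisfy the matrix
ansatz relation `D E = αβ (D + E)`. In any algebra this relation expands `(D + E)ⁿ` into normally
ordered words `EⁱDʲ` with ballot number coefficients. Since `Dʲ 1 = αʲ`, setting `X = β` gives
the formula.
-/

namespace CondensedCatalan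
open Polynomial

section Ballot

/-- The ballot numbers, indexed so that `b(n, p)` is `ballot (n - p) p`: for `p ≥ 1`, `ballot m p`
counts the lattice paths with `m` down-steps and `m + p` up-steps that stay above their starting
height after the first step. -/
def ballot : ℕ → ℕ → ℕ
  | 0, _ => 1
  | _ + 1, 0 => 0
  | m + 1, p + 1 => ballot (m + 1) p + ballot m (p + 2)

lemma ballot_pos (m p : ℕ) : 0 < ballot m (p + 1) := by
  induction m generalizing p with
  | zero => simp only [ballot, zero_lt_one]
  | succ m ih =>
    rw [ballot]
    exact Nat.add_pos_right _ (ih (p + 1))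

theorem mul_ballot (m p : ℕ) : (2 * m + p) * ballot m p = p * (2 * m + p).choose m := by
  induction m generalizing p with
  | zero => simp only [ballot, Nat.choose_zero_right, mul_zero, zero_add]
  | succ m ihm =>
    induction p with
    | zero => simp only [ballot, mul_zero, zero_mul]
    | succ p ihp =>
      have hm := ihm (p + 2)
      have hchoose := Nat.choose_succ_right_eq (2 * m + p + 2) m
      rw [show 2 * m + p + 2 - m = m + p + 2 by lia] at hchoose
      rw [show 2 * m + (p + 2) = 2 * m + p + 2 by ring] at hm
      rw [show 2 * (m + 1) + p = 2 * m + p + 2 by ring] at ihp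
      rw [show 2 * (m + 1) + (p + 1) = 2 * m + p + 2 + 1 by ring, Nat.choose_succ_succ',
        ballot]
      refine Nat.eq_of_mul_eq_mul_left (by positivity : 0 < (2 * m + p + 2) * (m + 1)) ?_
      zify at *
      linear_combination (2 * m + p + 3 : ℤ) * (m + 1) * (ihp + hm) +
        (p * (2 * m + p + 3) - (2 * m + p + 2) * (p + 1) : ℤ) * hchoose

lemma ballot_succ_right (m p : ℕ) :
    ballot m (p + 1) = ∑ x ∈ antidiagonal m, ballot x.1 (x.2 + p) := by
  induction m generalizing p with
  | zero => simp [ballot]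
  | succ m ih =>
    rw [Nat.sum_antidiagonal_succ', ballot, ih, zero_add]
    simp only [add_right_comm _ 1 p, add_assoc]

end Ballot

section NormalOrdering

lemma sum_antidiagonal_assoc {M N : Type*} [AddCommMonoid M] [HasAntidiagonal M]
    [AddCommMonoid N] (n : M) (f : M → M → M → N) :
    ∑ x ∈ antidiagonal n, ∑ y ∈ antidiagonal x.2, f x.1 y.1 y.2 =
      ∑ x ∈ antidiagonal n, ∑ y ∈ antidiagonal x.1, f y.1 y.2 x.2 := by
  rw [sum_sigma', sum_sigma']
  refine sum_nbij' (fun x => ⟨(x.1.1 + x.2.1, x.2.2), (x.1.1, x.2.1)⟩)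
    (fun x => ⟨(x.2.1, x.2.2 + x.1.2), (x.2.2, x.1.2)⟩) ?_ ?_ ?_ ?_ ?_ <;>
    grind [HasAntidiagonal.mem_antidiagonal]

variable {R A : Type*} [CommSemiring R] [Semiring A] [Algebra R A]

/-- The sum `∑ EⁱDʲ` over `i + j = p` of the normally ordered words of length `p`. -/
def normalSum (D E : A) (p : ℕ) : A := ∑ x ∈ antidiagonal p, E ^ x.1 * D ^ x.2

lemma normalSum_zero (D E : A) : normalSum D E 0 = 1 := by
  simp only [normalSum, Nat.antidiagonal_zero, sum_singleton, pow_zero, mul_one]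

lemma normalSum_succ (D E : A) (p : ℕ) :
    normalSum D E (p + 1) = D ^ (p + 1) + E * normalSum D E p := by
  simp only [normalSum, Nat.sum_antidiagonal_succ, pow_zero, one_mul, mul_sum, pow_succ' E,
    mul_assoc]

variable {c : R} {D E : A}

lemma add_mul_normalSum_succ (h : D * E = c • (D + E)) (p : ℕ) :
    (D + E) * normalSum D E (p + 1) =
      normalSum D E (p + 2) + c • ((D + E) * normalSum D E p) := by
  calc (D + E) * normalSum D E (p + 1)
      = D ^ (p + 2) + D * E * normalSum D E p + E * normalSum D E (p + 1) := by
        rw [add_mul, normalSum_succ D E p, mul_add D, ← pow_succ', mul_assoc]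
    _ = normalSum D E (p + 2) + c • ((D + E) * normalSum D E p) := by
        rw [h, smul_mul_assoc, normalSum_succ D E (p + 1), add_right_comm]

lemma add_mul_normalSum (h : D * E = c • (D + E)) (p : ℕ) :
    (D + E) * normalSum D E p =
      ∑ x ∈ antidiagonal p, c ^ x.1 • normalSum D E (x.2 + 1) := by
  induction p with
  | zero => simp [normalSum_succ, normalSum_zero]
  | succ p ih =>
    simp only [add_mul_normalSum_succ h, ih, Nat.sum_antidiagonal_succ, pow_zero, one_smul,
      smul_sum, smul_smul, pow_succ' c]

theorem add_pow_eq_sum_ballot (h : D * E = c • (D + E)) (n : ℕ) :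
    (D + E) ^ n =
      ∑ x ∈ antidiagonal n, (c ^ x.1 * ballot x.1 x.2) • normalSum D E x.2 := by
  induction n with
  | zero => simp [normalSum_zero, ballot]
  | succ n ih =>
    calc (D + E) ^ (n + 1)
        = ∑ x ∈ antidiagonal n, ∑ y ∈ antidiagonal x.2,
            (c ^ (x.1 + y.1) * ballot x.1 (y.1 + y.2)) • normalSum D E (y.2 + 1) := by
          rw [pow_succ', ih, mul_sum]
          refine sum_congr rfl fun x _ => ?_
          rw [mul_smul_comm, add_mul_normalSum h, smul_sum]
          refine sum_congr rfl fun y hy => ?_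
          rw [mem_antidiagonal.1 hy, smul_smul, pow_add, mul_right_comm]
      _ = ∑ x ∈ antidiagonal n,
            (c ^ x.1 * ballot x.1 (x.2 + 1)) • normalSum D E (x.2 + 1) := by
          rw [sum_antidiagonal_assoc n fun i j k =>
            (c ^ (i + j) * (ballot i (j + k) : R)) • normalSum D E (k + 1)]
          refine sum_congr rfl fun x _ => ?_
          rw [ballot_succ_right, Nat.cast_sum, mul_sum, sum_smul]
          refine sum_congr rfl fun y hy => ?_
          rw [mem_antidiagonal.1 hy]
      _ = _ := by
          rw [Nat.sum_antidiagonal_succ', ballot, Nat.cast_zero, mul_zero, zero_smul,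
            zero_add]

end NormalOrdering

section RowOperator

variable {R : Type*} [CommSemiring R] (a c : R)

/-- The image of `Xⁱ` under `rowOperator a c`, namely `a cⁱ + ∑ cⁱ⁻ʲ⁺¹ Xʲ` over `1 ≤ j ≤ i`. -/
noncomputable def rowPoly : ℕ → R[X]
  | 0 => C a
  | i + 1 => c • (rowPoly i + X ^ (i + 1))

/-- The operator on generating polynomials in the number of α-free columns that adds a full top row;
tableaux need it for `a = α` and `c = αβ`. The row over `i` free columns either fills all of them
with α, or fills the last `i - j` with α and the `j`-th with β, leaving `j` columns free. -/
noncomputable def rowOperator : Module.End R R[X] :=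
  (basisMonomials R).constr R (rowPoly a c)

lemma rowOperator_monomial (i : ℕ) (r : R) :
    rowOperator a c (monomial i r) = r • rowPoly a c i := by
  have h := (basisMonomials R).constr_basis R (rowPoly a c) i
  rw [coe_basisMonomials] at h
  rw [← mul_one r, ← smul_eq_mul, ← smul_monomial, map_smul, rowOperator, h, smul_eq_mul, mul_one]

lemma rowOperator_mul_mulLeft_X :
    rowOperator a c * LinearMap.mulLeft R X =
      c • (rowOperator a c + LinearMap.mulLeft R X) := by
  refine lhom_ext' fun i => LinearMap.ext_ring ?_
  simp [X_mul_monomial, rowOperator_monomial, rowPoly, X_pow_eq_monomial]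

lemma rowOperator_pow_one (j : ℕ) : (rowOperator a c ^ j) 1 = C (a ^ j) := by
  induction j with
  | zero => simp
  | succ j ih =>
    rw [pow_succ', Module.End.mul_apply, ih, ← monomial_zero_left, rowOperator_monomial,
      rowPoly, smul_C, smul_eq_mul, pow_succ]

lemma normalSum_rowOperator_one (p : ℕ) :
    normalSum (rowOperator a c) (LinearMap.mulLeft R X) p 1 =
      ∑ x ∈ antidiagonal p, monomial x.1 (a ^ x.2) := by
  simp only [normalSum, LinearMap.sum_apply, Module.End.mul_apply, rowOperator_pow_one,
    LinearMap.pow_mulLeft, LinearMap.mulLeft_apply, X_pow_mul_C, C_mul_X_pow_eq_monomial]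

theorem rowOperator_add_mulLeft_X_pow_one (n : ℕ) :
    ((rowOperator a c + LinearMap.mulLeft R X : Module.End R R[X]) ^ n) 1 =
      ∑ x ∈ antidiagonal n, (c ^ x.1 * ballot x.1 x.2) •
        ∑ y ∈ antidiagonal x.2, monomial y.1 (a ^ y.2) := by
  simp only [add_pow_eq_sum_ballot (rowOperator_mul_mulLeft_X a c), LinearMap.sum_apply,
    LinearMap.smul_apply, normalSum_rowOperator_one]

end RowOperator

section Cells

variable {ι : Type*} [Fintype ι]

/-- The set of positions of the symbol `v` in the row `r` (`true` for α, `false` for β). -/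
def cells (v : Bool) (r : ι → Option Bool) : Finset ι := {c | r c = some v}

lemma mem_cells {v : Bool} {r : ι → Option Bool} {c : ι} : c ∈ cells v r ↔ r c = some v := by
  simp only [cells, mem_filter_univ]

lemma cells_none (v : Bool) : cells v (fun _ : ι => none) = ∅ := by
  ext c
  simp [mem_cells]

variable [DecidableEq ι] {m : ι} {r : ι → Option Bool}

lemma cells_update_self (v : Bool) :
    cells v (Function.update r m (some v)) = insert m (cells v r) := by
  ext c
  by_cases hc : c = m <;> simp [mem_cells, hc]

lemma cells_update_of_ne {u v : Bool} (huv : u ≠ v) (hrm : r m = none) :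
    cells v (Function.update r m (some u)) = cells v r := by
  ext c
  by_cases hc : c = m <;> simp [mem_cells, hc, hrm, huv]

variable {R : Type*} [CommSemiring R] (a b : R)

/-- The factor by which an admissible top row `r` over the free columns `S` changes the weight of
a tableau: α for the row itself, and α, β for the symbols; each α uses up a free column,
whose variable `X` becomes a β. -/
noncomputable def rowWeight (S : Finset ι) (r : ι → Option Bool) : R[X] :=
  monomial #(S \ cells true r)
    (a ^ (1 + #(cells true r)) * b ^ (#(cells false r) + #(cells true r)))

variable {S : Finset ι}

lemma rowWeight_update_beta (hm : m ∉ S) :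
    rowWeight a b (insert m S) (Function.update (fun _ => none) m (some false)) =
      (a * b) • X ^ (#S + 1) := by
  simp [rowWeight, cells_update_self, cells_update_of_ne, cells_none, hm, X_pow_eq_monomial,
    smul_monomial]

lemma rowWeight_update_alpha (hm : m ∉ S) (hrm : r m = none) :
    rowWeight a b (insert m S) (Function.update r m (some true)) =
      (a * b) • rowWeight a b S r := by
  have hmr : m ∉ cells true r := by simp [mem_cells, hrm]
  rw [rowWeight, rowWeight, cells_update_self, cells_update_of_ne (by decide) hrm,
    card_insert_of_notMem hmr, insert_sdiff_insert, sdiff_insert_of_notMem hm, smul_monomial,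
    smul_eq_mul]
  ring_nf

end Cells

section TopRow

variable {ι : Type*} [LinearOrder ι]

/-- `r` is an admissible filling of a full row placed on top of a tableau with set of α-free
columns `S`. -/
def IsTopRow (S : Finset ι) (r : ι → Option Bool) : Prop :=
  (∀ c ∉ S, r c = none) ∧ (∀ c c', r c = some false → c' < c → r c' = none) ∧
    ∀ c ∈ S, (∀ c', c < c' → r c' ≠ some false) → r c ≠ none

lemma isTopRow_empty_iff {r : ι → Option Bool} : IsTopRow ∅ r ↔ r = fun _ => none := by
  constructor
  · exact fun h => funext fun c => h.1 c (notMem_empty c)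
  · rintro rfl
    simp [IsTopRow]

variable {S : Finset ι} {m : ι} {r : ι → Option Bool}

lemma isTopRow_update_beta (hm : ∀ c ∈ S, c < m) :
    IsTopRow (insert m S) (Function.update (fun _ => none) m (some false)) := by
  simp only [IsTopRow, Function.update_apply]
  grind

lemma IsTopRow.update_alpha (hm : ∀ c ∈ S, c < m) (hr : IsTopRow S r) :
    IsTopRow (insert m S) (Function.update r m (some true)) := by
  simp only [IsTopRow, Function.update_apply] at hr ⊢
  grind

lemma IsTopRow.eq_update_beta (hm : ∀ c ∈ S, c < m) (hr : IsTopRow (insert m S) r)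
    (hrm : r m = some false) : r = Function.update (fun _ => none) m (some false) := by
  funext c
  simp only [IsTopRow, Function.update_apply] at hr ⊢
  grind

lemma IsTopRow.update_none (hm : ∀ c ∈ S, c < m) (hr : IsTopRow (insert m S) r)
    (hrm : r m = some true) : IsTopRow S (Function.update r m none) := by
  simp only [IsTopRow, Function.update_apply] at hr ⊢
  grind

lemma IsTopRow.ne_none (hm : ∀ c ∈ S, c < m) (hr : IsTopRow (insert m S) r) : r m ≠ none := by
  simp only [IsTopRow] at hr
  grind

lemma isTopRow_insert_iff (hm : ∀ c ∈ S, c < m) :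
    IsTopRow (insert m S) r ↔ r = Function.update (fun _ => none) m (some false) ∨
      ∃ r', IsTopRow S r' ∧ Function.update r' m (some true) = r := by
  constructor
  · intro hr
    rcases hrm : r m with _ | _ | _
    · exact absurd hrm (hr.ne_none hm)
    · exact .inl (hr.eq_update_beta hm hrm)
    · exact .inr ⟨_, hr.update_none hm hrm, by simp [← hrm]⟩
  · rintro (rfl | ⟨r', hr', rfl⟩)
    · exact isTopRow_update_beta hm
    · exact hr'.update_alpha hm

variable [Fintype ι]

lemma IsTopRow.cells_subset (hr : IsTopRow S r) (v : Bool) : cells v r ⊆ S := by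
  intro c hc
  by_contra hcS
  simp [mem_cells, hr.1 c hcS] at hc

variable {R : Type*} [CommSemiring R] (a b : R)

theorem sum_rowWeight (S : Finset ι) :
    ∑ r with IsTopRow S r, rowWeight a b S r = rowPoly a (a * b) #S := by
  induction S using Finset.induction_on_max with
  | empty =>
    simp [isTopRow_empty_iff, filter_eq', rowWeight, cells_none, rowPoly]
  | insert m S hm ih =>
    have hmS : m ∉ S := fun h => (hm m h).false
    have hset : ({r | IsTopRow (insert m S) r} : Finset (ι → Option Bool)) =
        insert (Function.update (fun _ => none) m (some false))
          (image (fun r => Function.update r m (some true)) {r | IsTopRow S r}) := by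
      ext r
      simp only [mem_filter_univ, isTopRow_insert_iff hm, mem_insert, mem_image]
    rw [hset, sum_insert, sum_image, rowWeight_update_beta a b hmS, card_insert_of_notMem hmS,
      rowPoly, ← ih, smul_add, smul_sum, add_comm]
    · congr 1
      refine sum_congr rfl fun r hr => rowWeight_update_alpha a b hmS ?_
      exact (mem_filter.1 hr).2.1 m hmS
    · intro r hr r' hr' h
      have hrm := (mem_filter.1 hr).2.1 m hmS
      have hrm' := (mem_filter.1 hr').2.1 m hmS
      funext c
      by_cases hc : c = m
      · rw [hc, hrm, hrm']
      · simpa [hc] using congrFun h c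
    · simp only [mem_image, not_exists, not_and]
      intro r _ h
      simpa using congrFun h m

end TopRow

section Tableaux

/-- A candidate for a tableau in the `k × w` rectangle: the row lengths of its shape, and the
entries of its boxes in the encoding of `IsCCT`. -/
abbrev ShapedFilling (k w : ℕ) := (Fin k → Fin (w + 1)) × (Fin k → Fin w → Option Bool)

/-- The Condensed Catalan tableaux of size `(k, k + w)`. -/
noncomputable def tableaux (k w : ℕ) : Finset (ShapedFilling k w) :=
  univ.filter fun T =>
    (∀ i j : Fin k, i ≤ j → (T.1 j : ℕ) ≤ (T.1 i : ℕ)) ∧ IsCCT k w (fun i => (T.1 i : ℕ)) T.2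

/-- The columns without α, over which a new top row may carry symbols. -/
def freeColumns {k w : ℕ} (F : Fin k → Fin w → Option Bool) : Finset (Fin w) :=
  {c | ∀ i, F i c ≠ some true}

variable {k w : ℕ}

lemma mem_tableaux {T : ShapedFilling k w} :
    T ∈ tableaux k w ↔ (∀ i j : Fin k, i ≤ j → (T.1 j : ℕ) ≤ (T.1 i : ℕ)) ∧
      IsCCT k w (fun i => (T.1 i : ℕ)) T.2 := by
  simp only [tableaux, mem_filter_univ]

lemma mem_freeColumns {F : Fin k → Fin w → Option Bool} {c : Fin w} :
    c ∈ freeColumns F ↔ ∀ i, F i c ≠ some true := by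
  simp only [freeColumns, mem_filter_univ]

lemma aCount_eq_sum (F : Fin k → Fin w → Option Bool) :
    aCount k w F = ∑ i, #(cells true (F i)) := by
  simp only [aCount, cells, card_filter, Fintype.sum_prod_type]

lemma bCount_eq_sum (F : Fin k → Fin w → Option Bool) :
    bCount k w F = ∑ i, #(cells false (F i)) := by
  simp only [bCount, cells, card_filter, Fintype.sum_prod_type]

variable {R : Type*} [CommSemiring R] (a b : R)

/-- The weight of a filling with the contribution β of every free column replaced by `X`, so that
the weight of the tableau is recovered at `X = β`. -/
noncomputable def weight (F : Fin k → Fin w → Option Bool) : R[X] :=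
  monomial #(freeColumns F) (a ^ (k + aCount k w F) * b ^ (#(freeColumns F)ᶜ + bCount k w F))

lemma eval_weight (F : Fin k → Fin w → Option Bool) :
    (weight a b F).eval b = a ^ (k + aCount k w F) * b ^ (w + bCount k w F) := by
  have hcard := card_add_card_compl (freeColumns F)
  rw [Fintype.card_fin] at hcard
  rw [weight, eval_monomial, mul_assoc, ← pow_add, add_comm _ #_, ← add_assoc, hcard]

/-- The sum of the `weight`s of all tableaux in a `k × w` rectangle. -/
noncomputable def weightSum (k w : ℕ) : R[X] := ∑ T ∈ tableaux k w, weight a b T.2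

end Tableaux

section AddTopRow

variable {k w : ℕ}

/-- The tableau `T` with a row of maximal length, filled by `r`, placed on top. -/
def addTopRow (r : Fin w → Option Bool) (T : ShapedFilling k w) : ShapedFilling (k + 1) w :=
  (Fin.cons (Fin.last w) T.1, Fin.cons r T.2)

lemma addTopRow_tail {T : ShapedFilling (k + 1) w} (hT : T.1 0 = Fin.last w) :
    addTopRow (T.2 0) (Fin.tail T.1, Fin.tail T.2) = T := by
  rw [addTopRow, ← hT, Fin.cons_self_tail, Fin.cons_self_tail]

lemma addTopRow_mem_tableaux_iff {r : Fin w → Option Bool} {T : ShapedFilling k w} :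
    addTopRow r T ∈ tableaux (k + 1) w ↔ T ∈ tableaux k w ∧ IsTopRow (freeColumns T.2) r := by
  have hfull (c : Fin w) : ¬ w ≤ (c : ℕ) := by lia
  have hle (i : Fin k) : (T.1 i : ℕ) ≤ w := by lia
  simp only [addTopRow, mem_tableaux, IsCCT, IsTopRow, mem_freeColumns, Fin.forall_fin_succ,
    Fin.cons_zero, Fin.cons_succ, Fin.val_last, Fin.succ_le_succ_iff, Fin.succ_lt_succ_iff,
    Fin.is_lt, hfull, hle, Fin.succ_pos, Fin.not_lt_zero, Fin.zero_le, forall_true_left,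
    false_implies, le_refl, true_and, implies_true, lt_irrefl, not_forall, not_not,
    forall_exists_index, Fin.le_zero_iff, Fin.succ_ne_zero]
  grind

lemma freeColumns_cons (r : Fin w → Option Bool) (F : Fin k → Fin w → Option Bool) :
    freeColumns (Fin.cons r F : Fin (k + 1) → Fin w → Option Bool) =
      freeColumns F \ cells true r := by
  ext c
  simp [mem_freeColumns, mem_cells, Fin.forall_fin_succ, and_comm]

lemma sum_card_cells_cons (v : Bool) (r : Fin w → Option Bool) (F : Fin k → Fin w → Option Bool) :
    ∑ i, #(cells v ((Fin.cons r F : Fin (k + 1) → Fin w → Option Bool) i)) =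
      #(cells v r) + ∑ i, #(cells v (F i)) := by
  simp only [Fin.sum_univ_succ, Fin.cons_zero, Fin.cons_succ]

variable {R : Type*} [CommSemiring R] (a b : R)

lemma weight_addTopRow {r : Fin w → Option Bool} (T : ShapedFilling k w)
    (hr : IsTopRow (freeColumns T.2) r) :
    weight a b (addTopRow r T).2 =
      (a ^ (k + aCount k w T.2) * b ^ (#(freeColumns T.2)ᶜ + bCount k w T.2)) •
        rowWeight a b (freeColumns T.2) r := by
  have hcompl : #(freeColumns T.2 \ cells true r)ᶜ = #(freeColumns T.2)ᶜ + #(cells true r) := by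
    have h₁ := card_add_card_compl (freeColumns T.2 \ cells true r)
    have h₂ := card_add_card_compl (freeColumns T.2)
    have h₃ := card_sdiff_add_card_eq_card (hr.cells_subset true)
    lia
  rw [addTopRow, weight, freeColumns_cons, hcompl, rowWeight, smul_monomial, smul_eq_mul,
    aCount_eq_sum, bCount_eq_sum, aCount_eq_sum, bCount_eq_sum, sum_card_cells_cons,
    sum_card_cells_cons]
  ring_nf

lemma sum_weight_addTopRow (T : ShapedFilling k w) :
    ∑ r with IsTopRow (freeColumns T.2) r, weight a b (addTopRow r T).2 =
      rowOperator a (a * b) (weight a b T.2) := by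
  rw [weight, rowOperator_monomial, ← sum_rowWeight, smul_sum]
  exact sum_congr rfl fun r hr => weight_addTopRow a b T (mem_filter.1 hr).2

theorem sum_weight_full_first_row (k w : ℕ) :
    ∑ T ∈ tableaux (k + 1) w with T.1 0 = Fin.last w, weight a b T.2 =
      rowOperator a (a * b) (weightSum a b k w) := by
  simp only [weightSum, map_sum, ← sum_weight_addTopRow]
  rw [sum_sigma']
  symm
  refine sum_nbij' (fun x => addTopRow x.2 x.1)
    (fun T => ⟨(Fin.tail T.1, Fin.tail T.2), T.2 0⟩) ?_ ?_ ?_ ?_ ?_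
  · rintro ⟨T, r⟩ h
    simp only [mem_sigma, mem_filter_univ] at h
    exact mem_filter.2 ⟨addTopRow_mem_tableaux_iff.2 h, rfl⟩
  · intro T hT
    obtain ⟨hT, hfull⟩ := mem_filter.1 hT
    rw [← addTopRow_tail hfull, addTopRow_mem_tableaux_iff] at hT
    simpa only [mem_sigma, mem_filter_univ] using hT
  · exact fun _ _ => rfl
  · exact fun T hT => addTopRow_tail (mem_filter.1 hT).2
  · exact fun _ _ => rfl

end AddTopRow

section AddEmptyColumn

variable {k w : ℕ}

/-- The tableau `T` in a rectangle with one more column, which stays outside of the shape. -/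
def addEmptyColumn (T : ShapedFilling k w) : ShapedFilling k (w + 1) :=
  (fun i => (T.1 i).castSucc, fun i => Fin.snoc (T.2 i) none)

lemma addEmptyColumn_injective :
    Function.Injective (addEmptyColumn : ShapedFilling k w → ShapedFilling k (w + 1)) := by
  intro T T' h
  simp only [addEmptyColumn, Prod.mk.injEq, funext_iff] at h
  refine Prod.ext (funext fun i => Fin.castSucc_injective _ (h.1 i)) ?_
  funext i c
  simpa using h.2 i c.castSucc

lemma addEmptyColumn_mem_tableaux_iff {T : ShapedFilling k w} :
    addEmptyColumn T ∈ tableaux k (w + 1) ↔ T ∈ tableaux k w := by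
  have hle (i : Fin k) : (T.1 i : ℕ) ≤ w := by lia
  have hlt (i : Fin k) : ¬ w < (T.1 i : ℕ) := by lia
  have hlast (c : Fin w) : ¬ Fin.last w < c.castSucc := (Fin.castSucc_lt_last c).not_gt
  simp [addEmptyColumn, mem_tableaux, IsCCT, Fin.forall_fin_succ', hle, hlt, hlast,
    -Fin.val_fin_le, -Fin.val_fin_lt]

lemma exists_addEmptyColumn_eq {T : ShapedFilling k (w + 1)} (hT : T ∈ tableaux k (w + 1))
    (hlast : ∀ i, T.1 i ≠ Fin.last (w + 1)) : ∃ T', addEmptyColumn T' = T := by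
  refine ⟨(fun i => (T.1 i).castPred (hlast i), fun i c => T.2 i c.castSucc), ?_⟩
  refine Prod.ext (funext fun i => Fin.castSucc_castPred _ (hlast i)) ?_
  funext i c
  induction c using Fin.lastCases with
  | cast c => simp [addEmptyColumn]
  | last =>
    have hle : (T.1 i : ℕ) ≤ w := by
      have := Fin.val_lt_last (hlast i)
      lia
    simpa [addEmptyColumn] using ((mem_tableaux.1 hT).2.1 i (Fin.last w) hle).symm

lemma freeColumns_addEmptyColumn (T : ShapedFilling k w) :
    freeColumns (addEmptyColumn T).2 =
      insert (Fin.last w) ((freeColumns T.2).map Fin.castSuccEmb) := by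
  ext c
  induction c using Fin.lastCases <;>
    simp [mem_freeColumns, addEmptyColumn, Fin.castSucc_ne_last]

lemma card_cells_snoc_none (v : Bool) (r : Fin w → Option Bool) :
    #(cells v (Fin.snoc r none : Fin (w + 1) → Option Bool)) = #(cells v r) := by
  simp only [cells, card_filter, Fin.sum_univ_castSucc, Fin.snoc_castSucc, Fin.snoc_last,
    reduceCtorEq, if_false, add_zero]

variable {R : Type*} [CommSemiring R] (a b : R)

lemma weight_addEmptyColumn (T : ShapedFilling k w) :
    weight a b (addEmptyColumn T).2 = X * weight a b T.2 := by
  have hfree : #(freeColumns (addEmptyColumn T).2) = #(freeColumns T.2) + 1 := by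
    rw [freeColumns_addEmptyColumn, card_insert_of_notMem (by simp [Fin.castSucc_ne_last]),
      card_map]
  have hcompl : #(freeColumns (addEmptyColumn T).2)ᶜ = #(freeColumns T.2)ᶜ := by
    rw [card_compl, card_compl, hfree, Fintype.card_fin, Fintype.card_fin, Nat.add_sub_add_right]
  rw [weight, weight, hfree, hcompl, X_mul_monomial]
  simp only [aCount_eq_sum, bCount_eq_sum, addEmptyColumn, card_cells_snoc_none]

theorem sum_weight_no_full_row (k w : ℕ) :
    ∑ T ∈ tableaux k (w + 1) with ∀ i, T.1 i ≠ Fin.last (w + 1), weight a b T.2 =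
      X * weightSum a b k w := by
  rw [weightSum, mul_sum]
  symm
  refine sum_nbij addEmptyColumn ?_ addEmptyColumn_injective.injOn ?_ ?_
  · intro T hT
    exact mem_filter.2 ⟨addEmptyColumn_mem_tableaux_iff.2 hT, fun i => Fin.castSucc_ne_last _⟩
  · intro T hT
    obtain ⟨hT, hlast⟩ := mem_filter.1 hT
    obtain ⟨T', rfl⟩ := exists_addEmptyColumn_eq hT hlast
    exact ⟨T', addEmptyColumn_mem_tableaux_iff.1 hT, rfl⟩
  · exact fun T _ => (weight_addEmptyColumn a b T).symm

end AddEmptyColumn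

section Recursion

variable {R : Type*} [CommSemiring R] (a b : R)

lemma weightSum_zero_zero : weightSum a b 0 0 = 1 := by
  have huniv : tableaux 0 0 = univ := by
    ext T
    simp [mem_tableaux, IsCCT]
  simp [weightSum, huniv, weight, aCount, bCount, freeColumns]

lemma weightSum_zero_succ (w : ℕ) : weightSum a b 0 (w + 1) = X * weightSum a b 0 w := by
  rw [← sum_weight_no_full_row, weightSum, filter_true_of_mem fun _ _ i => i.elim0]

lemma weightSum_succ_zero (k : ℕ) :
    weightSum a b (k + 1) 0 = rowOperator a (a * b) (weightSum a b k 0) := by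
  rw [← sum_weight_full_first_row, weightSum,
    filter_true_of_mem fun T _ => Subsingleton.elim (α := Fin 1) (T.1 0) (Fin.last 0)]

lemma first_row_ne_last_iff {k w : ℕ} {T : ShapedFilling (k + 1) w}
    (hT : T ∈ tableaux (k + 1) w) :
    T.1 0 ≠ Fin.last w ↔ ∀ i, T.1 i ≠ Fin.last w := by
  refine ⟨fun h i hi => h (Fin.last_le_iff.1 ?_), fun h => h 0⟩
  exact hi ▸ (mem_tableaux.1 hT).1 0 i (Fin.zero_le i)

lemma weightSum_succ_succ (k w : ℕ) :
    weightSum a b (k + 1) (w + 1) =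
      rowOperator a (a * b) (weightSum a b k (w + 1)) + X * weightSum a b (k + 1) w := by
  rw [← sum_weight_full_first_row, ← sum_weight_no_full_row,
    ← filter_congr fun T hT => first_row_ne_last_iff hT, sum_filter_add_sum_filter_not, weightSum]

lemma sum_antidiagonal_weightSum_succ (n : ℕ) :
    ∑ x ∈ antidiagonal (n + 1), weightSum a b x.1 x.2 =
      rowOperator a (a * b) (∑ x ∈ antidiagonal n, weightSum a b x.1 x.2) +
        X * ∑ x ∈ antidiagonal n, weightSum a b x.1 x.2 := by
  cases n with
  | zero =>
    simp [Nat.antidiagonal_succ, weightSum_succ_zero, weightSum_zero_succ, add_comm]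
  | succ n =>
    rw [map_sum, mul_sum, Nat.sum_antidiagonal_succ, Nat.sum_antidiagonal_succ',
      Nat.sum_antidiagonal_succ' (n := n), Nat.sum_antidiagonal_succ (n := n)]
    simp only [weightSum_zero_succ _ _ (n + 1), weightSum_succ_zero, weightSum_succ_succ,
      sum_add_distrib]
    abel

theorem sum_antidiagonal_weightSum (n : ℕ) :
    ∑ x ∈ antidiagonal n, weightSum a b x.1 x.2 =
      ((rowOperator a (a * b) + LinearMap.mulLeft R X : Module.End R R[X]) ^ n) 1 := by
  induction n with
  | zero => simp [weightSum_zero_zero]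
  | succ n ih =>
    rw [sum_antidiagonal_weightSum_succ, ih, pow_succ', Module.End.mul_apply,
      LinearMap.add_apply, LinearMap.mulLeft_apply]

theorem sum_antidiagonal_tableaux (n : ℕ) :
    ∑ x ∈ antidiagonal n, ∑ T ∈ tableaux x.1 x.2,
        a ^ (x.1 + aCount x.1 x.2 T.2) * b ^ (x.2 + bCount x.1 x.2 T.2) =
      ∑ x ∈ antidiagonal n, (a * b) ^ x.1 * ballot x.1 x.2 *
        ∑ y ∈ antidiagonal x.2, a ^ y.2 * b ^ y.1 := by
  have h := congrArg (eval b) (sum_antidiagonal_weightSum a b n)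
  simpa only [rowOperator_add_mulLeft_X_pow_one, weightSum, eval_finsetSum, eval_weight, eval_smul,
    eval_monomial, smul_eq_mul] using h

end Recursion

section Reindexing

lemma mul_ballot_sub {n p : ℕ} (hpn : p ≤ n) :
    (2 * n - p) * ballot (n - p) p = p * (2 * n - p).choose n := by
  have h := mul_ballot (n - p) p
  rwa [show 2 * (n - p) + p = 2 * n - p by lia,
    Nat.choose_symm_of_eq_add (show 2 * n - p = (n - p) + n by lia)] at h

lemma sum_antidiagonal_ballot {R : Type*} [CommSemiring R] (a b : R) {n : ℕ} (hn : 1 ≤ n) :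
    ∑ x ∈ antidiagonal n, (a * b) ^ x.1 * ballot x.1 x.2 *
        ∑ y ∈ antidiagonal x.2, a ^ y.2 * b ^ y.1 =
      ∑ p ∈ Icc 1 n, (ballot (n - p) p : R) *
        ∑ i ∈ range (p + 1), a ^ (n - i) * b ^ (n - p + i) := by
  have hzero : ballot n 0 = 0 := by
    obtain ⟨m, rfl⟩ := Nat.exists_eq_add_of_le' hn
    rw [ballot]
  rw [← Nat.sum_antidiagonal_swap, Nat.sum_antidiagonal_eq_sum_range_succ_mk, range_eq_Ico,
    sum_eq_sum_Ico_succ_bot n.succ_pos, Prod.fst_swap, Prod.snd_swap, Nat.sub_zero, hzero,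
    Nat.cast_zero, mul_zero, zero_mul, zero_add, zero_add, Nat.succ_eq_add_one,
    Ico_add_one_right_eq_Icc]
  refine sum_congr rfl fun p hp => ?_
  rw [Prod.fst_swap, Prod.snd_swap, mul_comm (_ ^ _) (Nat.cast _), mul_assoc,
    Nat.sum_antidiagonal_eq_sum_range_succ_mk, mul_sum]
  congr 1
  refine sum_congr rfl fun i hi => ?_
  have hpn : p ≤ n := (mem_Icc.1 hp).2
  have hip : i ≤ p := mem_range_succ_iff.1 hi
  rw [show n - i = (n - p) + (p - i) by lia, mul_pow, pow_add, pow_add]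
  ring

end Reindexing

end CondensedCatalan

open CondensedCatalan in
theorem stmt6_general {R : Type*} [CommSemiring R] (α β : R) (n : ℕ) (hn : 1 ≤ n) :
    ∃ bal : ℕ → ℕ,
      (∀ p, 1 ≤ p → p ≤ n →
        (2 * n - p) * bal p = p * Nat.choose (2 * n - p) n ∧ 0 < bal p) ∧
      (∑ k ∈ Finset.range (n + 1),
          ∑ pr ∈ Finset.univ.filter
              (fun pr : (Fin k → Fin (n - k + 1)) × (Fin k → Fin (n - k) → Option Bool) =>
                (∀ i j : Fin k, i ≤ j → (pr.1 j : ℕ) ≤ (pr.1 i : ℕ)) ∧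
                IsCCT k (n - k) (fun i => (pr.1 i : ℕ)) pr.2),
            α ^ (k + aCount k (n - k) pr.2) * β ^ ((n - k) + bCount k (n - k) pr.2))
        = ∑ p ∈ Finset.Icc 1 n,
            (bal p : R) * ∑ i ∈ Finset.range (p + 1), α ^ (n - i) * β ^ (n - p + i) := by
  refine ⟨fun p => ballot (n - p) p, fun p hp hpn => ⟨mul_ballot_sub hpn, ?_⟩, ?_⟩
  · obtain ⟨q, rfl⟩ := Nat.exists_eq_add_of_le' hp
    exact ballot_pos _ q
  · rw [← sum_antidiagonal_ballot α β hn, ← sum_antidiagonal_tableaux,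
      Nat.sum_antidiagonal_eq_sum_range_succ_mk]
    rfl

/-- (Derrida's partition function formula) `Z_n(α,β)`, the sum of the weights of all
Condensed Catalan tableaux of size `(k,n)` over all `0 ≤ k ≤ n`, equals
`Σ_{p=1}^n b(n,p) Σ_{i=0}^p α^(n-i) β^(n-p+i)` where the ballot numbers `b(n,p)` are
the positive integers with `(2n-p)·b(n,p) = p·binom(2n-p, n)`. Here `α = X 0`,
`β = X 1` in `ℤ[α,β]`. -/
theorem stmt6 (n : ℕ) (hn : 1 ≤ n) :
    ∃ bal : ℕ → ℕ,
      (∀ p, 1 ≤ p → p ≤ n →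
        (2 * n - p) * bal p = p * Nat.choose (2 * n - p) n ∧ 0 < bal p) ∧
      (∑ k ∈ Finset.range (n + 1),
          ∑ pr ∈ Finset.univ.filter
              (fun pr : (Fin k → Fin (n - k + 1)) × (Fin k → Fin (n - k) → Option Bool) =>
                (∀ i j : Fin k, i ≤ j → (pr.1 j : ℕ) ≤ (pr.1 i : ℕ)) ∧
                IsCCT k (n - k) (fun i => (pr.1 i : ℕ)) pr.2),
            (MvPolynomial.X 0 : MvPolynomial (Fin 2) ℤ) ^ (k + aCount k (n - k) pr.2) *
              MvPolynomial.X 1 ^ ((n - k) + bCount k (n - k) pr.2))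
        = ∑ p ∈ Finset.Icc 1 n,
            (bal p : MvPolynomial (Fin 2) ℤ) *
              ∑ i ∈ Finset.range (p + 1),
                MvPolynomial.X 0 ^ (n - i) * MvPolynomial.X 1 ^ (n - p + i) := by
  exact stmt6_general _ _ n hn
end
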